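/- Let μ, ν be compositions of n. For each x ∈ D_{μ,ν}, the subspace H_μ T_x H^cl_ν of H_n has basis {X^α C^β T_w : α ∈ ℤ^n, β ∈ {0,1}^n, w ∈ S_μ x S_ν}; moreover H_n decomposes as the direct sum H_n = ⊕_{x ∈ D_{μ,ν}} H_μ T_x H^cl_ν. -/

import Mathlib

set_option maxHeartbeats 1000000

namespace HC

/-- Generators of the affine Hecke–Clifford superalgebra `H_n`. -/
inductive Gen (n : ℕ) : Type
  | X : Fin n → Gen n
  | Xinv : Fin n → Gen n
  | C : Fin n → Gen n
  | T : Fin (n - 1) → Gen n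

/-- The node `i` of `Fin n`, for `i : Fin (n-1)` (1-based: the node `i`). -/
def lo {n : ℕ} (i : Fin (n - 1)) : Fin n :=
  ⟨i.val, by have := i.isLt; omega⟩

/-- The node `i+1` of `Fin n`, for `i : Fin (n-1)`. -/
def hi {n : ℕ} (i : Fin (n - 1)) : Fin n :=
  ⟨i.val + 1, by have := i.isLt; omega⟩

variable (F : Type) [Field F]

/-- The free algebra on the generators. -/
abbrev FA (n : ℕ) : Type := FreeAlgebra F (Gen n)

noncomputable def fx {n : ℕ} (i : Fin n) : FA F n := FreeAlgebra.ι F (Gen.X i)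
noncomputable def fxinv {n : ℕ} (i : Fin n) : FA F n := FreeAlgebra.ι F (Gen.Xinv i)
noncomputable def fc {n : ℕ} (i : Fin n) : FA F n := FreeAlgebra.ι F (Gen.C i)
noncomputable def ft {n : ℕ} (i : Fin (n - 1)) : FA F n := FreeAlgebra.ι F (Gen.T i)

/-- The defining relations of the affine Hecke–Clifford superalgebra, with parameter
`q` and `ξ = q - q⁻¹`. -/
inductive Rel (q : F) (n : ℕ) : FA F n → FA F n → Prop
  | XXinv (i : Fin n) : Rel q n (fx F i * fxinv F i) 1
  | XinvX (i : Fin n) : Rel q n (fxinv F i * fx F i) 1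
  | XX (i j : Fin n) : Rel q n (fx F i * fx F j) (fx F j * fx F i)
  | XiXi (i j : Fin n) : Rel q n (fxinv F i * fxinv F j) (fxinv F j * fxinv F i)
  | XXi (i j : Fin n) (h : i ≠ j) : Rel q n (fx F i * fxinv F j) (fxinv F j * fx F i)
  | CC (i : Fin n) : Rel q n (fc F i * fc F i) 1
  | Canti (i j : Fin n) (h : i ≠ j) : Rel q n (fc F i * fc F j) (-(fc F j * fc F i))
  | CX (i : Fin n) : Rel q n (fc F i * fx F i) (fxinv F i * fc F i)
  | CXi (i : Fin n) : Rel q n (fc F i * fxinv F i) (fx F i * fc F i)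
  | CXo (i j : Fin n) (h : i ≠ j) : Rel q n (fc F i * fx F j) (fx F j * fc F i)
  | CXio (i j : Fin n) (h : i ≠ j) : Rel q n (fc F i * fxinv F j) (fxinv F j * fc F i)
  | Tquad (i : Fin (n - 1)) : Rel q n (ft F i * ft F i) ((q - q⁻¹) • ft F i + 1)
  | Tbraid (i j : Fin (n - 1)) (h : (j : ℕ) = (i : ℕ) + 1) :
      Rel q n (ft F i * ft F j * ft F i) (ft F j * ft F i * ft F j)
  | TTfar (i j : Fin (n - 1)) (h : (i : ℕ) + 1 < (j : ℕ)) :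
      Rel q n (ft F i * ft F j) (ft F j * ft F i)
  | TC (i : Fin (n - 1)) : Rel q n (ft F i * fc F (lo i)) (fc F (hi i) * ft F i)
  | TCo (i : Fin (n - 1)) (j : Fin n) (h1 : j ≠ lo i) (h2 : j ≠ hi i) :
      Rel q n (ft F i * fc F j) (fc F j * ft F i)
  | TXo (i : Fin (n - 1)) (j : Fin n) (h1 : j ≠ lo i) (h2 : j ≠ hi i) :
      Rel q n (ft F i * fx F j) (fx F j * ft F i)
  | TXio (i : Fin (n - 1)) (j : Fin n) (h1 : j ≠ lo i) (h2 : j ≠ hi i) :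
      Rel q n (ft F i * fxinv F j) (fxinv F j * ft F i)
  | cross (i : Fin (n - 1)) :
      Rel q n ((ft F i + (q - q⁻¹) • (fc F (lo i) * fc F (hi i))) * fx F (lo i) * ft F i)
        (fx F (hi i))

/-- The affine Hecke–Clifford superalgebra `H_n` over `F` with parameter `q`. -/
abbrev H (q : F) (n : ℕ) : Type := RingQuot (Rel F q n)

noncomputable def X (q : F) {n : ℕ} (i : Fin n) : H F q n :=
  RingQuot.mkAlgHom F (Rel F q n) (fx F i)

noncomputable def Xinv (q : F) {n : ℕ} (i : Fin n) : H F q n :=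
  RingQuot.mkAlgHom F (Rel F q n) (fxinv F i)

noncomputable def C (q : F) {n : ℕ} (i : Fin n) : H F q n :=
  RingQuot.mkAlgHom F (Rel F q n) (fc F i)

noncomputable def T (q : F) {n : ℕ} (i : Fin (n - 1)) : H F q n :=
  RingQuot.mkAlgHom F (Rel F q n) (ft F i)

/-- `q` is either a primitive root of unity of odd order (including `q = 1`)
or not a root of unity at all (and `q ≠ 0`). -/
def GoodParam (q : F) : Prop :=
  q ≠ 0 ∧ ((∃ m : ℕ, Odd m ∧ IsPrimitiveRoot q m) ∨ ∀ m : ℕ, 0 < m → q ^ m ≠ 1)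

/-- `X_i^a` for an integer exponent `a ∈ ℤ`. -/
noncomputable def XZ (q : F) {n : ℕ} (i : Fin n) (a : ℤ) : H F q n :=
  if 0 ≤ a then X F q i ^ a.toNat else Xinv F q i ^ (-a).toNat

/-- The monomial `X^α = X_1^{α_1} ⋯ X_n^{α_n}` for `α ∈ ℤ^n`. -/
noncomputable def Xmon (q : F) {n : ℕ} (α : Fin n → ℤ) : H F q n :=
  ((List.finRange n).map fun i => XZ F q i (α i)).prod

/-- The monomial `C^β = C_1^{β_1} ⋯ C_n^{β_n}` for `β ∈ {0,1}^n`. -/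
noncomputable def Cmon (q : F) {n : ℕ} (β : Fin n → Bool) : H F q n :=
  ((List.finRange n).map fun i => if β i then C F q i else 1).prod

/-- The basic transposition `s_i = (i, i+1)` of `S_n`. -/
def s {n : ℕ} (i : Fin (n - 1)) : Equiv.Perm (Fin n) := Equiv.swap (lo i) (hi i)

/-- The Coxeter length (number of inversions) of a permutation of `Fin n`. -/
def len {n : ℕ} (w : Equiv.Perm (Fin n)) : ℕ :=
  ((Finset.univ : Finset (Fin n × Fin n)).filter fun p => p.1 < p.2 ∧ w p.2 < w p.1).card

/-- `Tw` is the family of standard basis elements `T_w`, `w ∈ S_n`: it satisfies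
`T_1 = 1`, `T_{s_i} = T_i`, and `T_{s_i w} = T_i T_w` whenever `ℓ(s_i w) = ℓ(w) + 1`.
These conditions determine the family uniquely. -/
def IsTFam (q : F) {n : ℕ} (Tw : Equiv.Perm (Fin n) → H F q n) : Prop :=
  Tw 1 = 1 ∧ (∀ i : Fin (n - 1), Tw (s i) = T F q i) ∧
    ∀ (i : Fin (n - 1)) (w : Equiv.Perm (Fin n)),
      len (s i * w) = len w + 1 → Tw (s i * w) = T F q i * Tw w

/-- `h` is the quantum characteristic of `q`:  the smallest positive integer with
`q^{1-h} + q^{3-h} + ⋯ + q^{h-1} = 0`. -/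
def qcharEq (q : F) (h : ℕ) : Prop :=
  0 < h ∧ (∑ k ∈ Finset.range h, q ^ (1 - (h : ℤ) + 2 * (k : ℤ))) = 0 ∧
    ∀ h' : ℕ, 0 < h' → h' < h →
      (∑ k ∈ Finset.range h', q ^ (1 - (h' : ℤ) + 2 * (k : ℤ))) ≠ 0

/-- `i ∈ I = {0, 1, …, ℓ}` where `ℓ = (h-1)/2` (no condition if the quantum
characteristic is infinite). -/
def memI (q : F) (i : ℕ) : Prop := ∀ h : ℕ, qcharEq F q h → 2 * i + 1 ≤ h

/-- `q(i) = 2(q^{2i+1} + q^{-2i-1})/(q + q⁻¹)`. -/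
noncomputable def qres (q : F) (i : ℕ) : F :=
  2 * (q ^ (2 * i + 1) + q⁻¹ ^ (2 * i + 1)) / (q + q⁻¹)

/-- Index of the block containing position `k` (0-based), for a composition given as a
list of parts. -/
def blk : List ℕ → ℕ → ℕ
  | [], _ => 0
  | a :: rest, k => if k < a then 0 else blk rest (k - a) + 1

/-- Membership in the Young subgroup `S_μ ⊆ S_n`. -/
def InYoung {n : ℕ} (μ : List ℕ) (w : Equiv.Perm (Fin n)) : Prop :=
  ∀ k : Fin n, blk μ (w k).val = blk μ k.val

/-- `μ` is a composition of `n`. -/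
def IsComposition (μ : List ℕ) (n : ℕ) : Prop := (∀ a ∈ μ, 0 < a) ∧ μ.sum = n

/-- The parabolic subalgebra generated by all `X_i^{±1}`, `C_i`, and the `T_j` with
`j` in a set `J` of admissible indices. -/
def parabolicJ (q : F) {n : ℕ} (J : Set (Fin (n - 1))) : Subalgebra F (H F q n) :=
  Algebra.adjoin F
    ((Set.range fun i : Fin n => X F q i) ∪ (Set.range fun i : Fin n => Xinv F q i) ∪
      (Set.range fun i : Fin n => C F q i) ∪ {h | ∃ j ∈ J, h = T F q j})

/-- The parabolic subalgebra `H_μ` for a composition `μ`. -/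
def parabolicC (q : F) {n : ℕ} (μ : List ℕ) : Subalgebra F (H F q n) :=
  parabolicJ F q {j | InYoung μ (s j)}

/-- The classical parabolic subalgebra `H^cl_μ`, generated by the `T_j` with `s_j ∈ S_μ`. -/
def clparC (q : F) {n : ℕ} (μ : List ℕ) : Subalgebra F (H F q n) :=
  Algebra.adjoin F {h | ∃ j : Fin (n - 1), InYoung μ (s j) ∧ h = T F q j}

/-- The finite Hecke–Clifford subalgebra `H^fn_n`, generated by all `C_i` and `T_j`. -/
def Hfin (q : F) (n : ℕ) : Subalgebra F (H F q n) :=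
  Algebra.adjoin F
    ((Set.range fun i : Fin n => C F q i) ∪ {h | ∃ j : Fin (n - 1), h = T F q j})

/-- `x` is a minimal length `(S_μ, S_ν)`-double coset representative. -/
def IsMinDC {n : ℕ} (μ ν : List ℕ) (x : Equiv.Perm (Fin n)) : Prop :=
  ∀ u v : Equiv.Perm (Fin n), InYoung μ u → InYoung ν v → len x ≤ len (u * x * v)

/-- `w ∈ S_μ x S_ν`. -/
def InDC {n : ℕ} (μ ν : List ℕ) (x w : Equiv.Perm (Fin n)) : Prop :=
  ∃ u v : Equiv.Perm (Fin n), InYoung μ u ∧ InYoung ν v ∧ w = u * x * v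

/-- A covering step in the Bruhat order: multiplication by a reflection increasing length. -/
def BruhatStep {n : ℕ} (v w : Equiv.Perm (Fin n)) : Prop :=
  ∃ a b : Fin n, a ≠ b ∧ w = Equiv.swap a b * v ∧ len v < len w

/-- The Bruhat order on `S_n`. -/
def BruhatLE {n : ℕ} : Equiv.Perm (Fin n) → Equiv.Perm (Fin n) → Prop :=
  Relation.ReflTransGen BruhatStep

/-- The space of `A`-equivariant linear maps between two representations of the
`F`-algebra `A`. -/
def eqvHoms {A : Type} [Ring A] [Algebra F A] {M N : Type}
    [AddCommGroup M] [Module F M] [AddCommGroup N] [Module F N]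
    (ρM : A →ₐ[F] Module.End F M) (ρN : A →ₐ[F] Module.End F N) :
    Submodule F (M →ₗ[F] N) where
  carrier := {f | ∀ (x : A) (m : M), f (ρM x m) = ρN x (f m)}
  add_mem' := by
    intro f g hf hg x m
    simp only [LinearMap.add_apply, hf x m, hg x m, map_add]
  zero_mem' := by
    intro x m
    simp only [LinearMap.zero_apply, map_zero]
  smul_mem' := by
    intro c f hf x m
    simp only [LinearMap.smul_apply, hf x m, map_smul]

/-- `(E, ρE, ι)` is the module induced along the algebra morphism `φ : B →ₐ A` from
the `B`-representation `(M, ρ)`, i.e. `E = A ⊗_B M`, characterized by its universal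
property. -/
def IsInducedAlong {A B : Type} [Ring A] [Ring B] [Algebra F A] [Algebra F B]
    (φ : B →ₐ[F] A) {M : Type} [AddCommGroup M] [Module F M]
    (ρ : B →ₐ[F] Module.End F M) {E : Type} [AddCommGroup E] [Module F E]
    (ρE : A →ₐ[F] Module.End F E) (ι : M →ₗ[F] E) : Prop :=
  (∀ (b : B) (m : M), ι (ρ b m) = ρE (φ b) (ι m)) ∧
    ∀ (P : Type) [AddCommGroup P] [Module F P],
      ∀ (ρP : A →ₐ[F] Module.End F P) (f : M →ₗ[F] P),
        (∀ (b : B) (m : M), f (ρ b m) = ρP (φ b) (f m)) →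
        ∃! g : E →ₗ[F] P,
          (∀ (x : A) (e : E), g (ρE x e) = ρP x (g e)) ∧ ∀ m : M, g (ι m) = f m

/-- `δ` is the grading automorphism of the superalgebra `H_n`
(identity on even generators, `-1` on the odd generators `C_i`). -/
def IsGradingAut (q : F) {n : ℕ} (δ : H F q n →ₐ[F] H F q n) : Prop :=
  (∀ i : Fin n, δ (X F q i) = X F q i) ∧ (∀ i : Fin n, δ (Xinv F q i) = Xinv F q i) ∧
    (∀ i : Fin n, δ (C F q i) = -C F q i) ∧ ∀ i : Fin (n - 1), δ (T F q i) = T F q i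

/-- `τ` is the antiautomorphism of `H_n` with `τ(T_i) = T_i + ξ C_i C_{i+1}`,
`τ(C_j) = C_j`, `τ(X_j) = X_j`. -/
def IsTauAntiAut (q : F) {n : ℕ} (τ : H F q n →ₗ[F] H F q n) : Prop :=
  Function.Bijective τ ∧ (∀ a b : H F q n, τ (a * b) = τ b * τ a) ∧ τ 1 = 1 ∧
    (∀ i : Fin (n - 1),
      τ (T F q i) = T F q i + (q - q⁻¹) • (C F q (lo i) * C F q (hi i))) ∧
    (∀ j : Fin n, τ (C F q j) = C F q j) ∧ (∀ j : Fin n, τ (X F q j) = X F q j) ∧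
    ∀ j : Fin n, τ (Xinv F q j) = Xinv F q j

/-- `ρ'` is the representation of the subalgebra `B` obtained from the
`H_ν`-representation `ρν` by twisting with the isomorphism `φ_{x⁻¹}`
(determined by `X_i ↦ X_{x⁻¹ i}`, `C_i ↦ C_{x⁻¹ i}`, `T_w ↦ T_{x⁻¹ w x}`). -/
def IsTwistedRep (q : F) {n : ℕ} (ν : List ℕ) (x : Equiv.Perm (Fin n))
    (B : Subalgebra F (H F q n)) {M : Type} [AddCommGroup M] [Module F M]
    (ρν : ↥(parabolicC F q (n := n) ν) →ₐ[F] Module.End F M)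
    (ρ' : ↥B →ₐ[F] Module.End F M) : Prop :=
  (∀ (i : Fin n) (a : ↥B) (b : ↥(parabolicC F q (n := n) ν)),
      (a : H F q n) = X F q i → (b : H F q n) = X F q (x⁻¹ i) → ρ' a = ρν b) ∧
  (∀ (i : Fin n) (a : ↥B) (b : ↥(parabolicC F q (n := n) ν)),
      (a : H F q n) = Xinv F q i → (b : H F q n) = Xinv F q (x⁻¹ i) → ρ' a = ρν b) ∧
  (∀ (i : Fin n) (a : ↥B) (b : ↥(parabolicC F q (n := n) ν)),
      (a : H F q n) = C F q i → (b : H F q n) = C F q (x⁻¹ i) → ρ' a = ρν b) ∧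
  ∀ (j j' : Fin (n - 1)) (a : ↥B) (b : ↥(parabolicC F q (n := n) ν)),
      lo j' = x⁻¹ (lo j) → (a : H F q n) = T F q j → (b : H F q n) = T F q j' → ρ' a = ρν b

/-- The element `f = a_d X_1^d + ⋯ + a_1 X_1 + a_0` of `H_n`. -/
noncomputable def felem (q : F) (n d : ℕ) (aa : ℕ → F) : H F q n :=
  if h : 0 < n then ∑ i ∈ Finset.range (d + 1), aa i • X F q (⟨0, h⟩ : Fin n) ^ i else 0

/-- The conditions on the coefficients of `f`: degree `d ≥ 1`, monic, and
`a_i = a_0 a_{d-i}`. -/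
def GoodPoly (d : ℕ) (aa : ℕ → F) : Prop :=
  1 ≤ d ∧ aa d = 1 ∧ (∀ i ≤ d, aa i = aa 0 * aa (d - i)) ∧ ∀ i : ℕ, d < i → aa i = 0

/-- The relation generating the two-sided ideal `I_f` of `H_n`. -/
inductive CycRel (q : F) (n d : ℕ) (aa : ℕ → F) : H F q n → H F q n → Prop
  | rel : CycRel q n d aa (felem F q n d aa) 0

/-- The cyclotomic Hecke–Clifford superalgebra `H_n^f = H_n / I_f`. -/
abbrev Hf (q : F) (n d : ℕ) (aa : ℕ → F) : Type := RingQuot (CycRel F q n d aa)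

/-- The canonical quotient map `H_n → H_n^f`. -/
noncomputable def cyc (q : F) (n d : ℕ) (aa : ℕ → F) : H F q n →ₐ[F] Hf F q n d aa :=
  RingQuot.mkAlgHom F (CycRel F q n d aa)

noncomputable def Xf (q : F) (n d : ℕ) (aa : ℕ → F) (i : Fin n) : Hf F q n d aa :=
  cyc F q n d aa (X F q i)
noncomputable def Xinvf (q : F) (n d : ℕ) (aa : ℕ → F) (i : Fin n) : Hf F q n d aa :=
  cyc F q n d aa (Xinv F q i)
noncomputable def Cf (q : F) (n d : ℕ) (aa : ℕ → F) (i : Fin n) : Hf F q n d aa :=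
  cyc F q n d aa (C F q i)
noncomputable def Tf (q : F) (n d : ℕ) (aa : ℕ → F) (i : Fin (n - 1)) : Hf F q n d aa :=
  cyc F q n d aa (T F q i)

/-- `e` is the canonical embedding `H_k^f → H_N^f` (shifting all indices by `sh`;
for `sh = 0` this is the standard identification of `H_k^f` with a subalgebra of
`H_N^f`). -/
def IsCycEmb (q : F) (k N d : ℕ) (aa : ℕ → F) (sh : ℕ)
    (e : Hf F q k d aa →ₐ[F] Hf F q N d aa) : Prop :=
  (∀ (i : Fin k) (i' : Fin N), (i' : ℕ) = sh + (i : ℕ) →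
      e (Xf F q k d aa i) = Xf F q N d aa i') ∧
  (∀ (i : Fin k) (i' : Fin N), (i' : ℕ) = sh + (i : ℕ) →
      e (Xinvf F q k d aa i) = Xinvf F q N d aa i') ∧
  (∀ (i : Fin k) (i' : Fin N), (i' : ℕ) = sh + (i : ℕ) →
      e (Cf F q k d aa i) = Cf F q N d aa i') ∧
  ∀ (j : Fin (k - 1)) (j' : Fin (N - 1)), (j' : ℕ) = sh + (j : ℕ) →
      e (Tf F q k d aa j) = Tf F q N d aa j'

/-- `δ` is the grading automorphism of the superalgebra `H_n^f`. -/
def IsCycGrading (q : F) (n d : ℕ) (aa : ℕ → F)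
    (δ : Hf F q n d aa →ₐ[F] Hf F q n d aa) : Prop :=
  (∀ i : Fin n, δ (Xf F q n d aa i) = Xf F q n d aa i) ∧
  (∀ i : Fin n, δ (Xinvf F q n d aa i) = Xinvf F q n d aa i) ∧
  (∀ i : Fin n, δ (Cf F q n d aa i) = -Cf F q n d aa i) ∧
  ∀ j : Fin (n - 1), δ (Tf F q n d aa j) = Tf F q n d aa j

/-- The elements `f_1 = f`, `f_{i+1} = (T_i + ξ C_i C_{i+1}) f_i T_i` of `H_n`
(0-based indexing: `fseq k = f_{k+1}`). -/
noncomputable def fseq (q : F) (n d : ℕ) (aa : ℕ → F) : ℕ → H F q n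
  | 0 => felem F q n d aa
  | k + 1 =>
    if h : k < n - 1 then
      (T F q (⟨k, h⟩ : Fin (n - 1)) +
          (q - q⁻¹) • (C F q (lo (⟨k, h⟩ : Fin (n - 1))) *
            C F q (hi (⟨k, h⟩ : Fin (n - 1))))) *
        fseq q n d aa k * T F q (⟨k, h⟩ : Fin (n - 1))
    else 0

/-- `f_Z = f_{z_1} ⋯ f_{z_u}` for `Z = {z_1 < ⋯ < z_u} ⊆ {1,…,n}` (0-based). -/
noncomputable def fZ (q : F) (n d : ℕ) (aa : ℕ → F) (Z : Finset (Fin n)) : H F q n :=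
  ((Z.sort (· ≤ ·)).map fun z => fseq F q n d aa (z : ℕ)).prod

/-- The subspace `H_μ T_x H^cl_ν` of `H_n`. -/
def HTxH (F : Type) [Field F] (q : F) {n : ℕ} (μ ν : List ℕ)
    (Tw : Equiv.Perm (Fin n) → H F q n) (x : Equiv.Perm (Fin n)) :
    Submodule F (H F q n) :=
  Submodule.span F
    {h | ∃ a ∈ parabolicC F q (n := n) μ, ∃ b ∈ clparC F q (n := n) ν, h = a * Tw x * b}

/-- The family `X^α C^β T_w`, for `w` running over the double coset `S_μ x S_ν`. -/
noncomputable def dcFam (F : Type) [Field F] (q : F) {n : ℕ} (μ ν : List ℕ)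
    (Tw : Equiv.Perm (Fin n) → H F q n) (x : Equiv.Perm (Fin n))
    (p : (Fin n → ℤ) × (Fin n → Bool) × {w : Equiv.Perm (Fin n) // InDC μ ν x w}) :
    H F q n :=
  Xmon F q p.1 * Cmon F q p.2.1 * Tw p.2.2.1

section Permutations
open Equiv

lemma lo_lt_hi {n : ℕ} (i : Fin (n - 1)) : lo i < hi i := by
  simp [lo, hi, Fin.lt_def]

lemma lo_ne_hi {n : ℕ} (i : Fin (n - 1)) : lo i ≠ hi i := (lo_lt_hi i).ne

lemma s_lo {n : ℕ} (i : Fin (n - 1)) : s i (lo i) = hi i := by simp [s]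
lemma s_hi {n : ℕ} (i : Fin (n - 1)) : s i (hi i) = lo i := by simp [s]
lemma s_of_ne {n : ℕ} (i : Fin (n - 1)) {k : Fin n} (h1 : k ≠ lo i) (h2 : k ≠ hi i) :
    s i k = k := swap_apply_of_ne_of_ne h1 h2

lemma s_mul_s {n : ℕ} (i : Fin (n - 1)) : s i * s i = 1 := by simp [s]

lemma s_inv {n : ℕ} (i : Fin (n - 1)) : (s i)⁻¹ = s i := by simp [s]

lemma s_mul_s_mul {n : ℕ} (i : Fin (n - 1)) (w : Perm (Fin n)) : s i * (s i * w) = w := by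
  rw [← mul_assoc, s_mul_s, one_mul]

/-- A simple transposition preserves every strict inequality except `lo i < hi i`. -/
lemma s_lt_s {n : ℕ} (i : Fin (n - 1)) {a b : Fin n} (h : a < b)
    (hne : ¬ (a = lo i ∧ b = hi i)) : s i a < s i b := by
  simp only [Fin.ext_iff, Fin.lt_def, lo, hi] at h hne
  simp only [s, swap_apply_def, Fin.ext_iff, lo, hi]
  split_ifs <;> simp only [Fin.lt_def] <;> omega

/-- Inversions of `w`. -/
def inversions {n : ℕ} (w : Perm (Fin n)) : Finset (Fin n × Fin n) :=
  Finset.univ.filter fun p => p.1 < p.2 ∧ w p.2 < w p.1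

lemma mem_inversions {n : ℕ} {w : Perm (Fin n)} {a b : Fin n} :
    (a, b) ∈ inversions w ↔ a < b ∧ w b < w a := by
  simp [inversions]

lemma len_s_mul_of_lt {n : ℕ} (i : Fin (n - 1)) (w : Perm (Fin n))
    (h : w⁻¹ (lo i) < w⁻¹ (hi i)) : len (s i * w) = len w + 1 := by
  have key : inversions (s i * w) = insert (w⁻¹ (lo i), w⁻¹ (hi i)) (inversions w) := by
    ext ⟨a, b⟩
    simp only [Finset.mem_insert, mem_inversions, Prod.mk.injEq, Perm.mul_apply,
      Perm.eq_inv_iff_eq]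
    constructor
    · rintro ⟨hab, hlt⟩
      by_cases hc : w a = lo i ∧ w b = hi i
      · exact Or.inl hc
      refine Or.inr ⟨hab, ?_⟩
      by_contra hn
      have hlt' : w a < w b := lt_of_le_of_ne (not_lt.mp hn) (fun e => hab.ne (w.injective e))
      exact absurd (s_lt_s i hlt' hc) (not_lt.mpr hlt.le)
    · rintro (⟨ha, hb⟩ | ⟨hab, hlt⟩)
      · refine ⟨?_, ?_⟩
        · rw [← ha, ← hb] at h
          simpa using h
        · rw [ha, hb, s_lo, s_hi]
          exact lo_lt_hi i
      · refine ⟨hab, s_lt_s i hlt ?_⟩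
        rintro ⟨hb, ha⟩
        rw [← hb, ← ha] at h
        exact absurd (by simpa using h) hab.asymm
  have hnot : (w⁻¹ (lo i), w⁻¹ (hi i)) ∉ inversions w := by
    simpa [mem_inversions] using fun _ => (lo_lt_hi i).le
  change (inversions (s i * w)).card = (inversions w).card + 1
  rw [key, Finset.card_insert_of_notMem hnot]

lemma inv_lo_ne_inv_hi {n : ℕ} (i : Fin (n - 1)) (w : Perm (Fin n)) :
    w⁻¹ (lo i) ≠ w⁻¹ (hi i) := fun h => lo_ne_hi i ((w⁻¹).injective h)

lemma len_s_mul_of_gt {n : ℕ} (i : Fin (n - 1)) (w : Perm (Fin n))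
    (h : w⁻¹ (hi i) < w⁻¹ (lo i)) : len w = len (s i * w) + 1 := by
  have := len_s_mul_of_lt i (s i * w) (by simpa [mul_inv_rev, s_inv, s_lo, s_hi] using h)
  rwa [s_mul_s_mul] at this

lemma len_inv {n : ℕ} (w : Perm (Fin n)) : len w⁻¹ = len w := by
  refine Finset.card_bij (fun p _ => (w⁻¹ p.2, w⁻¹ p.1)) ?_ ?_ ?_
  · simp +contextual
  · rintro ⟨a, b⟩ _ ⟨c, d⟩ _ h
    simp_all
  · rintro ⟨a, b⟩ h
    exact ⟨(w b, w a), by simpa using And.symm (by simpa using h), by simp⟩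

lemma len_mul_s_of_gt {n : ℕ} (i : Fin (n - 1)) (w : Perm (Fin n))
    (h : w (hi i) < w (lo i)) : len w = len (w * s i) + 1 := by
  rw [← len_inv, ← len_inv (w * s i), mul_inv_rev, s_inv]
  exact len_s_mul_of_gt i _ (by simpa using h)

/-- A function on `Fin n` increasing along consecutive entries within the blocks of a monotone
map is increasing within those blocks. -/
lemma lt_of_consecutive {n : ℕ} {b : ℕ → ℕ} (hb : Monotone b) (f : Fin n → Fin n)
    (h : ∀ j : Fin (n - 1), b (lo j) = b (hi j) → f (lo j) < f (hi j)) {k l : Fin n}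
    (hkl : k < l) (hbkl : b k = b l) : f k < f l := by
  obtain ⟨l, hl⟩ := l
  induction l with
  | zero => simp [Fin.lt_def] at hkl
  | succ m ih =>
    have hkm : k.val ≤ m := Nat.lt_succ_iff.mp hkl
    have hm : m < n - 1 := by omega
    have e1 : b k ≤ b m := hb hkm
    have e2 : b m ≤ b (m + 1) := hb (Nat.le_succ m)
    have hbk : b k = b (m + 1) := hbkl
    have hstep := h ⟨m, hm⟩ (by simp only [lo, hi]; omega)
    rcases hkm.eq_or_lt with e | hlt
    · have : k = lo ⟨m, hm⟩ := Fin.ext e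
      rw [this]; exact hstep
    · exact (ih (by omega) hlt (by simp only; omega)).trans hstep

/-- A permutation with no descents is the identity. -/
lemma exists_descent {n : ℕ} {w : Perm (Fin n)} (hw : w ≠ 1) :
    ∃ i : Fin (n - 1), w (hi i) < w (lo i) := by
  by_contra! hcon
  apply hw
  have hmono : StrictMono w := fun k l hkl =>
    lt_of_consecutive (b := fun _ => 0) monotone_const w
      (fun j _ => lt_of_le_of_ne (hcon j) (fun e => lo_ne_hi j (w.injective e))) hkl rfl
  ext k
  have : (hmono.orderIsoOfSurjective w w.surjective) = OrderIso.refl _ := Subsingleton.elim _ _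
  simpa using congrArg (fun e : Fin n ≃o Fin n => (e k).val) this

lemma exists_left_descent {n : ℕ} {w : Perm (Fin n)} (hw : w ≠ 1) :
    ∃ i : Fin (n - 1), len w = len (s i * w) + 1 := by
  obtain ⟨i, hi⟩ := exists_descent (inv_ne_one.mpr hw)
  exact ⟨i, len_s_mul_of_gt i w hi⟩

lemma exists_right_descent {n : ℕ} {w : Perm (Fin n)} (hw : w ≠ 1) :
    ∃ i : Fin (n - 1), w (hi i) < w (lo i) ∧ len w = len (w * s i) + 1 := by
  obtain ⟨i, hi⟩ := exists_descent hw
  exact ⟨i, hi, len_mul_s_of_gt i w hi⟩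

lemma blk_mono (μ : List ℕ) : Monotone (blk μ) := by
  induction μ with
  | nil => intro a b _; simp [blk]
  | cons c r ih =>
    intro a b hab
    simp only [blk]
    split_ifs with h1 h2
    · exact le_rfl
    · exact Nat.zero_le _
    · omega
    · exact Nat.succ_le_succ (ih (by omega))

lemma InYoung.one {n : ℕ} (μ : List ℕ) : InYoung μ (1 : Perm (Fin n)) := fun _ => rfl

lemma InYoung.mul {n : ℕ} {μ : List ℕ} {u v : Perm (Fin n)} (hu : InYoung μ u)
    (hv : InYoung μ v) : InYoung μ (u * v) := fun k => (hu (v k)).trans (hv k)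

lemma InYoung.inv {n : ℕ} {μ : List ℕ} {u : Perm (Fin n)} (hu : InYoung μ u) :
    InYoung μ u⁻¹ := fun k => by simpa using (hu (u⁻¹ k)).symm

lemma inYoung_s {n : ℕ} {μ : List ℕ} {j : Fin (n - 1)} (h : blk μ (lo j) = blk μ (hi j)) :
    InYoung μ (s j) := by
  intro k
  by_cases h1 : k = lo j
  · rw [h1, s_lo, h]
  by_cases h2 : k = hi j
  · rw [h2, s_hi, h]
  rw [s_of_ne j h1 h2]

/-- A nontrivial element of a Young subgroup has a right descent inside the subgroup. -/
lemma InYoung.exists_right_descent {n : ℕ} {μ : List ℕ} {u : Perm (Fin n)} (hu : InYoung μ u)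
    (h1 : u ≠ 1) : ∃ j : Fin (n - 1), InYoung μ (s j) ∧ len u = len (u * s j) + 1 := by
  obtain ⟨j, hj, hl⟩ := HC.exists_right_descent h1
  refine ⟨j, inYoung_s (le_antisymm (blk_mono μ (lo_lt_hi j).le) ?_), hl⟩
  rw [← hu (hi j), ← hu (lo j)]
  exact blk_mono μ hj.le

/-- Every Young subgroup is generated by the simple transpositions it contains. -/
lemma InYoung.induction {n : ℕ} {μ : List ℕ} {P : Perm (Fin n) → Prop} (one : P 1)
    (step : ∀ u j, InYoung μ u → InYoung μ (s j) → P u → P (u * s j)) {u : Perm (Fin n)}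
    (hu : InYoung μ u) : P u := by
  by_cases h1 : u = 1
  · rwa [h1]
  obtain ⟨j, hj, hl⟩ := hu.exists_right_descent h1
  have := step (u * s j) j (hu.mul hj) hj (InYoung.induction one step (hu.mul hj))
  rwa [mul_assoc, s_mul_s, mul_one] at this
termination_by len u

lemma IsMinDC.lt_right {n : ℕ} {μ ν : List ℕ} {x : Perm (Fin n)} (hx : IsMinDC μ ν x)
    {k l : Fin n} (hkl : k < l) (hb : blk ν k = blk ν l) : x k < x l := by
  refine lt_of_consecutive (blk_mono ν) x (fun j hj => ?_) hkl hb
  by_contra hcon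
  have hgt : x (hi j) < x (lo j) :=
    lt_of_le_of_ne (not_lt.mp hcon) (fun e => lo_ne_hi j (x.injective e).symm)
  have h1 := len_mul_s_of_gt j x hgt
  have h2 := hx 1 (s j) (InYoung.one μ) (inYoung_s hj)
  rw [one_mul] at h2
  omega

lemma IsMinDC.symm {n : ℕ} {μ ν : List ℕ} {x : Perm (Fin n)} (hx : IsMinDC μ ν x) :
    IsMinDC ν μ x⁻¹ := by
  intro u v hu hv
  rw [len_inv, ← len_inv (u * x⁻¹ * v)]
  simpa [mul_inv_rev, mul_assoc] using hx v⁻¹ u⁻¹ hv.inv hu.inv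

/-- Minimal length double coset representatives are unique. -/
lemma IsMinDC.eq_of_inDC {n : ℕ} {μ ν : List ℕ} {x y : Perm (Fin n)} (hx : IsMinDC μ ν x)
    (hy : IsMinDC μ ν y) (hxy : InDC μ ν x y) : x = y := by
  obtain ⟨u, v, hu, hv, rfl⟩ := hxy
  set y := u * x * v with hydef
  have mono1 : ∀ {z : Perm (Fin n)}, IsMinDC μ ν z →
      Monotone (fun k : Fin n => toLex (blk ν k, blk μ (z k))) := by
    intro z hz k l hkl
    rcases hkl.eq_or_lt with rfl | hlt
    · exact le_rfl
    rw [Prod.Lex.toLex_le_toLex]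
    rcases (blk_mono ν hkl).lt_or_eq with h | h
    · exact Or.inl h
    · exact Or.inr ⟨h, blk_mono μ (hz.lt_right hlt h).le⟩
  have mono2 : ∀ {z : Perm (Fin n)}, IsMinDC μ ν z →
      Monotone (fun k : Fin n => toLex (blk μ k, z⁻¹ k)) := by
    intro z hz k l hkl
    rcases hkl.eq_or_lt with rfl | hlt
    · exact le_rfl
    rw [Prod.Lex.toLex_le_toLex]
    rcases (blk_mono μ hkl).lt_or_eq with h | h
    · exact Or.inl h
    · exact Or.inr ⟨h, (hz.symm.lt_right hlt h).le⟩
  have e1 : (fun k : Fin n => toLex (blk ν k, blk μ (y k))) =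
      (fun k : Fin n => toLex (blk ν k, blk μ (x k))) ∘ v := by
    funext k
    simp only [Function.comp, hv k, hydef, Perm.mul_apply, hu (x (v k))]
  have c1 := Tuple.unique_monotone
    (f := fun k : Fin n => toLex (blk ν k, blk μ (x k))) (σ := 1) (τ := v)
    (mono1 hx) (e1 ▸ mono1 hy)
  have hcol : ∀ k, blk μ (x k) = blk μ (y k) := by
    intro k
    have := congrFun (c1.trans e1.symm) k
    exact (Prod.ext_iff.mp (toLex.injective this)).2
  have e2 : (fun k : Fin n => toLex (blk μ k, y⁻¹ k)) =
      (fun k : Fin n => toLex (blk μ k, x⁻¹ k)) ∘ (x * y⁻¹ : Perm (Fin n)) := by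
    funext k
    simp [hcol]
  have c2 := Tuple.unique_monotone
    (f := fun k : Fin n => toLex (blk μ k, x⁻¹ k)) (σ := 1) (τ := x * y⁻¹)
    (mono2 hx) (e2 ▸ mono2 hy)
  apply inv_injective
  ext k
  have := congrFun (c2.trans e2.symm) k
  exact congrArg Fin.val (Prod.ext_iff.mp (toLex.injective this)).2

lemma InDC.symm {n : ℕ} {μ ν : List ℕ} {x w : Perm (Fin n)} (h : InDC μ ν x w) :
    InDC μ ν w x := by
  obtain ⟨u, v, hu, hv, rfl⟩ := h
  exact ⟨u⁻¹, v⁻¹, hu.inv, hv.inv, by group⟩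

lemma InDC.trans {n : ℕ} {μ ν : List ℕ} {x y z : Perm (Fin n)} (h : InDC μ ν x y)
    (h' : InDC μ ν y z) : InDC μ ν x z := by
  obtain ⟨u, v, hu, hv, rfl⟩ := h
  obtain ⟨u', v', hu', hv', rfl⟩ := h'
  exact ⟨u' * u, v * v', hu'.mul hu, hv.mul hv', by group⟩

lemma InDC.refl {n : ℕ} {μ ν : List ℕ} (x : Perm (Fin n)) : InDC μ ν x x :=
  ⟨1, 1, InYoung.one _, InYoung.one _, by simp⟩

lemma exists_isMinDC {n : ℕ} (μ ν : List ℕ) (w : Perm (Fin n)) :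
    ∃ x, IsMinDC μ ν x ∧ InDC μ ν x w := by
  obtain ⟨x, hx, hmin⟩ :=
    (measure (len (n := n))).wf.has_min {x | InDC μ ν w x} ⟨w, InDC.refl w⟩
  refine ⟨x, fun u v hu hv => not_lt.mp (hmin _ ?_), InDC.symm hx⟩
  exact InDC.trans hx ⟨u, v, hu, hv, rfl⟩

end Permutations

section LaurentClifford
open Equiv

/-- Generators of the Laurent–Clifford algebra. -/
inductive LCGen (n : ℕ) : Type
  | x : Fin n → LCGen n
  | c : Fin n → LCGen n

/-- Relations of the Laurent–Clifford algebra, in which `c i * x i * c i` is the inverse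
of `x i`. -/
inductive LCRel (n : ℕ) : FreeAlgebra F (LCGen n) → FreeAlgebra F (LCGen n) → Prop
  | xx (i j : Fin n) : LCRel n (FreeAlgebra.ι F (.x i) * FreeAlgebra.ι F (.x j))
      (FreeAlgebra.ι F (.x j) * FreeAlgebra.ι F (.x i))
  | cc (i : Fin n) : LCRel n (FreeAlgebra.ι F (.c i) * FreeAlgebra.ι F (.c i)) 1
  | anti (i j : Fin n) (h : i ≠ j) :
      LCRel n (FreeAlgebra.ι F (.c i) * FreeAlgebra.ι F (.c j))
        (-(FreeAlgebra.ι F (.c j) * FreeAlgebra.ι F (.c i)))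
  | cx (i j : Fin n) (h : i ≠ j) :
      LCRel n (FreeAlgebra.ι F (.c i) * FreeAlgebra.ι F (.x j))
        (FreeAlgebra.ι F (.x j) * FreeAlgebra.ι F (.c i))
  | xcxc (i : Fin n) :
      LCRel n (FreeAlgebra.ι F (.x i) *
        (FreeAlgebra.ι F (.c i) * FreeAlgebra.ι F (.x i) * FreeAlgebra.ι F (.c i))) 1

/-- The Laurent–Clifford algebra, the subalgebra of `H_n` generated by the `X_i^{±1}` and `C_i`,
given by its own presentation. -/
def LC (n : ℕ) : Type := RingQuot (LCRel F n)

noncomputable instance (n : ℕ) : Ring (LC F n) := inferInstanceAs (Ring (RingQuot (LCRel F n)))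
noncomputable instance (n : ℕ) : Algebra F (LC F n) :=
  inferInstanceAs (Algebra F (RingQuot (LCRel F n)))

namespace LC

variable {F} {n : ℕ}

/-- The quotient map defining the Laurent–Clifford algebra. -/
noncomputable def mk : FreeAlgebra F (LCGen n) →ₐ[F] LC F n := RingQuot.mkAlgHom F (LCRel F n)

lemma mk_rel {a b : FreeAlgebra F (LCGen n)} (h : LCRel F n a b) : mk a = mk b :=
  RingQuot.mkAlgHom_rel F h

noncomputable def x (i : Fin n) : LC F n := mk (FreeAlgebra.ι F (.x i))
noncomputable def c (i : Fin n) : LC F n := mk (FreeAlgebra.ι F (.c i))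
/-- The inverse of `x i`. -/
noncomputable def y (i : Fin n) : LC F n := c i * x i * c i

lemma x_comm (i j : Fin n) : (x i * x j : LC F n) = x j * x i := by
  simpa only [x, y, c, map_mul, map_neg, map_one] using mk_rel (LCRel.xx (F := F) i j)

lemma c_mul_c (i : Fin n) : (c i * c i : LC F n) = 1 := by
  simpa only [x, y, c, map_mul, map_neg, map_one] using mk_rel (LCRel.cc (F := F) i)

lemma c_anti {i j : Fin n} (h : i ≠ j) : (c i * c j : LC F n) = -(c j * c i) := by
  simpa only [x, y, c, map_mul, map_neg, map_one] using mk_rel (LCRel.anti (F := F) i j h)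

lemma c_mul_x {i j : Fin n} (h : i ≠ j) : (c i * x j : LC F n) = x j * c i := by
  simpa only [x, y, c, map_mul, map_neg, map_one] using mk_rel (LCRel.cx (F := F) i j h)

lemma x_mul_y (i : Fin n) : (x i * y i : LC F n) = 1 := by
  simpa only [x, y, c, map_mul, map_neg, map_one] using mk_rel (LCRel.xcxc (F := F) i)

lemma c_mul_c_mul (i : Fin n) (z : LC F n) : c i * (c i * z) = z := by
  rw [← mul_assoc, c_mul_c, one_mul]

lemma c_mul_x_self (i : Fin n) : (c i * x i : LC F n) = y i * c i := by
  simp only [y, mul_assoc, c_mul_c, mul_one]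

lemma c_mul_y_self (i : Fin n) : (c i * y i : LC F n) = x i * c i := by
  simp only [y, mul_assoc, c_mul_c_mul]

lemma y_mul_x (i : Fin n) : (y i * x i : LC F n) = 1 := by
  have h := congrArg (fun z => c i * z * c i) (x_mul_y (F := F) i)
  simpa only [y, mul_assoc, c_mul_c, c_mul_c_mul, mul_one] using h

lemma c_mul_y {i j : Fin n} (h : i ≠ j) : (c i * y j : LC F n) = y j * c i := by
  simp only [y, mul_assoc]
  rw [← mul_assoc, c_anti h, neg_mul, mul_assoc, ← mul_assoc (c i), c_mul_x h, mul_assoc (x j),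
    c_anti h]
  simp

lemma x_mul_y_comm (i j : Fin n) : (x i * y j : LC F n) = y j * x i := by
  calc (x i * y j : LC F n) = y j * x j * (x i * y j) := by rw [y_mul_x, one_mul]
    _ = y j * (x i * x j) * y j := by rw [x_comm i j]; simp only [mul_assoc]
    _ = y j * x i := by rw [mul_assoc, mul_assoc, x_mul_y, mul_one]

lemma y_comm (i j : Fin n) : (y i * y j : LC F n) = y j * y i := by
  calc (y i * y j : LC F n) = y i * (y j * x i) * y i := by
        rw [mul_assoc, mul_assoc, x_mul_y, mul_one]
    _ = y j * y i := by rw [← x_mul_y_comm i j, ← mul_assoc, y_mul_x, one_mul]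

/-- Right-associated form of a rewriting rule. -/
lemma mul_assoc_rule {R : Type*} [Semigroup R] {a b r : R} (h : a * b = r) (z : R) :
    a * (b * z) = r * z := by rw [← mul_assoc, h]

section NormalForm

lemma c_mul_x_assoc {i j : Fin n} (h : i ≠ j) (z : LC F n) : c i * (x j * z) = x j * (c i * z) := by
  rw [mul_assoc_rule (c_mul_x h), mul_assoc]

lemma c_mul_y_assoc {i j : Fin n} (h : i ≠ j) (z : LC F n) : c i * (y j * z) = y j * (c i * z) := by
  rw [mul_assoc_rule (c_mul_y h), mul_assoc]

lemma c_mul_x_self_assoc (i : Fin n) (z : LC F n) : c i * (x i * z) = y i * (c i * z) := by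
  rw [mul_assoc_rule (c_mul_x_self i), mul_assoc]

lemma c_mul_y_self_assoc (i : Fin n) (z : LC F n) : c i * (y i * z) = x i * (c i * z) := by
  rw [mul_assoc_rule (c_mul_y_self i), mul_assoc]

lemma x_mul_y_assoc (i : Fin n) (z : LC F n) : x i * (y i * z) = z := by
  rw [mul_assoc_rule (x_mul_y i), one_mul]

lemma y_mul_x_assoc (i : Fin n) (z : LC F n) : y i * (x i * z) = z := by
  rw [mul_assoc_rule (y_mul_x i), one_mul]

lemma c_anti_assoc {i j : Fin n} (h : i ≠ j) (z : LC F n) :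
    c i * (c j * z) = -(c j * (c i * z)) := by
  rw [mul_assoc_rule (c_anti h), neg_mul, mul_assoc]

lemma y_comm_assoc (i j : Fin n) (z : LC F n) : y i * (y j * z) = y j * (y i * z) := by
  rw [← mul_assoc, y_comm, mul_assoc]

end NormalForm

variable (F)

/-- The universal property of the Laurent–Clifford algebra. -/
noncomputable def lift {B : Type*} [Ring B] [Algebra F B] (gx gc : Fin n → B)
    (hxx : ∀ i j, gx i * gx j = gx j * gx i) (hcc : ∀ i, gc i * gc i = 1)
    (hanti : ∀ i j, i ≠ j → gc i * gc j = -(gc j * gc i))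
    (hcx : ∀ i j, i ≠ j → gc i * gx j = gx j * gc i)
    (hxcxc : ∀ i, gx i * (gc i * gx i * gc i) = 1) : LC F n →ₐ[F] B :=
  RingQuot.liftAlgHom F ⟨FreeAlgebra.lift F (fun g => match g with
    | .x i => gx i
    | .c i => gc i), by
    rintro _ _ (⟨i, j⟩ | ⟨i⟩ | ⟨i, j, h⟩ | ⟨i, j, h⟩ | ⟨i⟩) <;>
      simp_all only [map_mul, map_neg, map_one, FreeAlgebra.lift_ι_apply, ne_eq, not_false_eq_true]⟩

variable {F}

lemma lift_x {B : Type*} [Ring B] [Algebra F B] (gx gc : Fin n → B) (h1 h2 h3 h4 h5) (i : Fin n) :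
    lift F gx gc h1 h2 h3 h4 h5 (x i) = gx i :=
  (RingQuot.liftAlgHom_mkAlgHom_apply _ _ _ _).trans (FreeAlgebra.lift_ι_apply _ _)

lemma lift_c {B : Type*} [Ring B] [Algebra F B] (gx gc : Fin n → B) (h1 h2 h3 h4 h5) (i : Fin n) :
    lift F gx gc h1 h2 h3 h4 h5 (c i) = gc i :=
  (RingQuot.liftAlgHom_mkAlgHom_apply _ _ _ _).trans (FreeAlgebra.lift_ι_apply _ _)

/-- Induction principle: a subalgebra-like predicate holding on generators holds everywhere. -/
lemma adjoin_eq_top (B : Subalgebra F (LC F n)) (hx : ∀ i, x i ∈ B) (hc : ∀ i, c i ∈ B) :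
    B = ⊤ := by
  rw [eq_top_iff]
  intro a ha
  clear ha
  obtain ⟨a, rfl⟩ : ∃ b, mk b = a := RingQuot.mkAlgHom_surjective F (LCRel F n) a
  induction a using FreeAlgebra.induction with
  | grade0 r => rw [AlgHom.commutes]; exact B.algebraMap_mem r
  | grade1 g => cases g with
    | x i => exact hx i
    | c i => exact hc i
  | mul a b ha hb => rw [map_mul]; exact B.mul_mem ha hb
  | add a b ha hb => rw [map_add]; exact B.add_mem ha hb

/-- The value on `x k` of the twisted derivation attached to the simple transposition `i`. -/
noncomputable def delX (i : Fin (n - 1)) (k : Fin n) : LC F n :=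
  if k = lo i then -(x (hi i) + c (lo i) * c (hi i) * x (lo i))
  else if k = hi i then x (hi i) - c (lo i) * c (hi i) * x (hi i) else 0

/-- The value on `c k` of the twisted derivation attached to the simple transposition `i`. -/
noncomputable def delC (i : Fin (n - 1)) (k : Fin n) : LC F n :=
  if k = hi i then c (hi i) - c (lo i) else 0

lemma delX_lo (i : Fin (n - 1)) :
    (delX i (lo i) : LC F n) = -(x (hi i) + c (lo i) * c (hi i) * x (lo i)) := by simp [delX]
lemma delX_hi (i : Fin (n - 1)) :
    (delX i (hi i) : LC F n) = x (hi i) - c (lo i) * c (hi i) * x (hi i) := by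
  simp [delX, (lo_ne_hi i).symm]
lemma delX_of_ne {i : Fin (n - 1)} {k : Fin n} (h1 : k ≠ lo i) (h2 : k ≠ hi i) :
    (delX i k : LC F n) = 0 := by simp [delX, h1, h2]
lemma delC_lo (i : Fin (n - 1)) : (delC i (lo i) : LC F n) = 0 := by simp [delC, lo_ne_hi i]
lemma delC_hi (i : Fin (n - 1)) : (delC i (hi i) : LC F n) = c (hi i) - c (lo i) := by simp [delC]
lemma delC_of_ne {i : Fin (n - 1)} {k : Fin n} (h2 : k ≠ hi i) :
    (delC i k : LC F n) = 0 := by simp [delC, h2]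

attribute [local simp] mul_add add_mul mul_sub sub_mul mul_assoc c_mul_x c_mul_y c_mul_x_assoc
  c_mul_y_assoc c_mul_c c_mul_c_mul c_mul_x_self c_mul_y_self c_mul_x_self_assoc c_mul_y_self_assoc
  x_mul_y y_mul_x x_mul_y_assoc y_mul_x_assoc

/-- A node is `lo i`, `hi i`, or different from both. -/
lemma node_cases (i : Fin (n - 1)) (k : Fin n) : k = lo i ∨ k = hi i ∨ (k ≠ lo i ∧ k ≠ hi i) := by
  tauto

lemma mul_upper {R : Type*} [Ring R] (a b d a' b' d' : R) :
    (!![a, b; 0, d] * !![a', b'; 0, d'] : Matrix (Fin 2) (Fin 2) R) =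
      !![a * a', a * b' + b * d'; 0, d * d'] := by
  simp

lemma x_mul_delX_comm (i : Fin (n - 1)) (k l : Fin n) :
    (x (s i k) * delX i l + delX i k * x l : LC F n) = x (s i l) * delX i k + delX i l * x k := by
  have hab := lo_ne_hi i
  have hba := hab.symm
  have main : (x (hi i) * delX i (hi i) + delX i (lo i) * x (hi i) : LC F n) =
      x (lo i) * delX i (lo i) + delX i (hi i) * x (lo i) := by
    rw [delX_lo, delX_hi]
    generalize lo i = a at *
    generalize hi i = b at *
    simp [hab, hba, x_comm b a, y_comm_assoc b a]
    abel
  have other : ∀ {k l : Fin n}, l ≠ lo i → l ≠ hi i →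
      (x (s i k) * delX i l + delX i k * x l : LC F n) =
        x (s i l) * delX i k + delX i l * x k := by
    intro k l h1 h2
    rw [delX_of_ne h1 h2, s_of_ne i h1 h2]
    rcases node_cases i k with rfl | rfl | ⟨h3, h4⟩
    · rw [delX_lo]
      simp only [mul_zero, zero_mul, zero_add, add_zero, mul_add, add_mul, mul_neg, neg_mul,
        mul_assoc, mul_assoc_rule (c_mul_x h1.symm).symm, mul_assoc_rule (c_mul_x h2.symm).symm,
        x_comm l]
    · rw [delX_hi]
      simp only [mul_zero, zero_mul, zero_add, add_zero, mul_sub, sub_mul,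
        mul_assoc, mul_assoc_rule (c_mul_x h1.symm).symm, mul_assoc_rule (c_mul_x h2.symm).symm,
        x_comm l]
    · simp [delX_of_ne h3 h4]
  rcases node_cases i l with rfl | rfl | ⟨h1, h2⟩
  · rcases node_cases i k with rfl | rfl | ⟨h3, h4⟩
    · rfl
    · rw [s_lo, s_hi]; exact main.symm
    · exact (other h3 h4).symm
  · rcases node_cases i k with rfl | rfl | ⟨h3, h4⟩
    · rw [s_lo, s_hi]; exact main
    · rfl
    · exact (other h3 h4).symm
  · exact other h1 h2

lemma c_mul_delC_self (i : Fin (n - 1)) (k : Fin n) :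
    (c (s i k) * delC i k + delC i k * c k : LC F n) = 0 := by
  by_cases h : k = hi i
  · subst h
    rw [s_hi, delC_hi]
    simp only [mul_sub, sub_mul, c_mul_c]
    abel
  · simp [delC_of_ne h]

lemma c_mul_delC_anti (i : Fin (n - 1)) {k l : Fin n} (hkl : k ≠ l) :
    (c (s i k) * delC i l + delC i k * c l : LC F n) =
      -(c (s i l) * delC i k + delC i l * c k) := by
  have hab := lo_ne_hi i
  have key : ∀ {k : Fin n}, k ≠ hi i → (c (s i k) * delC i (hi i) + delC i k * c (hi i) : LC F n) =
      -(c (s i (hi i)) * delC i k + delC i (hi i) * c k) := by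
    intro k hk
    rw [delC_of_ne hk, delC_hi]
    by_cases h : k = lo i
    · subst h
      rw [s_lo]
      simp only [mul_sub, sub_mul, c_mul_c, mul_zero, zero_mul]
      abel
    · rw [s_of_ne i h hk]
      simp only [mul_sub, sub_mul, mul_zero, zero_mul, c_anti hk, c_anti h]
      abel
  by_cases hl : l = hi i
  · subst hl; exact key hkl
  by_cases hk : k = hi i
  · subst hk; rw [key (Ne.symm hkl), neg_neg]
  · simp [delC_of_ne hl, delC_of_ne hk]

lemma c_mul_delX (i : Fin (n - 1)) {k l : Fin n} (hkl : k ≠ l) :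
    (c (s i k) * delX i l + delC i k * x l : LC F n) =
      x (s i l) * delC i k + delX i l * c k := by
  have hab := lo_ne_hi i
  have hba := hab.symm
  rcases node_cases i l with rfl | rfl | ⟨h1, h2⟩
  · rw [delX_lo, s_lo]
    rcases node_cases i k with rfl | rfl | ⟨h3, h4⟩
    · exact absurd rfl hkl
    · rw [s_hi, delC_hi]
      generalize lo i = a at *
      generalize hi i = b at *
      simp [hab, hba]
      abel
    · rw [s_of_ne i h3 h4, delC_of_ne h4]
      simp only [mul_add, add_mul, mul_neg, neg_mul, neg_add, mul_assoc, zero_mul, mul_zero,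
        zero_add, add_zero, c_mul_x h4, mul_assoc_rule (c_anti h3), mul_assoc_rule (c_anti h4),
        c_mul_x h3, neg_neg]
  · rw [delX_hi, s_hi]
    rcases node_cases i k with rfl | rfl | ⟨h3, h4⟩
    · rw [s_lo, delC_lo]
      generalize lo i = a at *
      generalize hi i = b at *
      simp [hab, c_anti hba, c_anti_assoc hba]
      abel
    · exact absurd rfl hkl
    · rw [s_of_ne i h3 h4, delC_of_ne h4]
      simp only [mul_sub, sub_mul, mul_neg, neg_mul, mul_assoc, zero_mul, mul_zero,
        zero_add, add_zero, c_mul_x h4, mul_assoc_rule (c_anti h3), mul_assoc_rule (c_anti h4), neg_neg]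
  · rw [delX_of_ne h1 h2, s_of_ne i h1 h2]
    by_cases hk : k = hi i
    · subst hk
      rw [delC_hi]
      simp only [mul_zero, zero_mul, zero_add, add_zero, sub_mul, mul_sub, c_mul_x h1.symm,
        c_mul_x h2.symm]
    · simp [delC_of_ne hk]

lemma x_mul_delX_self (i : Fin (n - 1)) (k : Fin n) :
    (x (s i k) * (c (s i k) * x (s i k) * delC i k +
      (c (s i k) * delX i k + delC i k * x k) * c k) + delX i k * (c k * x k * c k) : LC F n) =
      0 := by
  have hab := lo_ne_hi i
  have hba := hab.symm
  rcases node_cases i k with rfl | rfl | ⟨h3, h4⟩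
  · rw [delX_lo, delC_lo, s_lo]
    generalize lo i = a at *
    generalize hi i = b at *
    simp [hba, c_anti hba, c_anti_assoc hba]
  · rw [delX_hi, delC_hi, s_hi]
    generalize lo i = a at *
    generalize hi i = b at *
    simp [hab]
  · simp [delX_of_ne h3 h4, delC_of_ne h4]

/-- The matrix form `a ↦ [s a, ∂ a; 0, a]` of the twisted derivation attached to the simple
transposition `i`. -/
noncomputable def twist (i : Fin (n - 1)) : LC F n →ₐ[F] Matrix (Fin 2) (Fin 2) (LC F n) :=
  lift F (fun k => !![x (s i k), delX i k; 0, x k]) (fun k => !![c (s i k), delC i k; 0, c k])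
    (fun k l => by
      rw [mul_upper, mul_upper, x_mul_delX_comm i k l, x_comm (s i k) (s i l), x_comm k l])
    (fun k => by
      simp only [mul_upper, c_mul_delC_self, c_mul_c]
      exact Matrix.one_fin_two.symm)
    (fun k l h => by
      rw [mul_upper, mul_upper, c_mul_delC_anti i h, c_anti h, c_anti ((s i).injective.ne h)]
      simp)
    (fun k l h => by
      rw [mul_upper, mul_upper, c_mul_delX i h, c_mul_x h, c_mul_x ((s i).injective.ne h)])
    (fun k => by
      simp only [mul_upper, x_mul_delX_self]
      rw [← y, ← y, x_mul_y, x_mul_y]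
      exact Matrix.one_fin_two.symm)

end LC

end LaurentClifford

section TwistedDerivations
open Equiv
namespace LC
variable {F} {n : ℕ}

/-- The action of the simple transposition `i` on the Laurent–Clifford algebra. -/
noncomputable def sig (i : Fin (n - 1)) (a : LC F n) : LC F n := twist i a 0 0

/-- The twisted derivation of the Laurent–Clifford algebra attached to the simple
transposition `i`. -/
noncomputable def del (i : Fin (n - 1)) (a : LC F n) : LC F n := twist i a 0 1

lemma twist_lower (i : Fin (n - 1)) (a : LC F n) : twist i a 1 0 = 0 ∧ twist i a 1 1 = a := by
  let B : Subalgebra F (LC F n) :=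
    { carrier := {a | twist i a 1 0 = 0 ∧ twist i a 1 1 = a}
      mul_mem' := by
        rintro a b ⟨ha, ha'⟩ ⟨hb, hb'⟩
        simp only [Set.mem_ofPred_eq, map_mul, Matrix.mul_apply, Fin.sum_univ_two, ha, ha', hb, hb']
        simp
      add_mem' := by
        rintro a b ⟨ha, ha'⟩ ⟨hb, hb'⟩
        simp only [Set.mem_ofPred_eq, map_add, Matrix.add_apply, ha, ha', hb, hb']
        simp
      algebraMap_mem' := by
        intro r
        simp [Matrix.algebraMap_matrix_apply] }
  have hB : B = ⊤ := adjoin_eq_top B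
    (fun k => by
      change twist i (x k) 1 0 = 0 ∧ twist i (x k) 1 1 = x k
      rw [twist, lift_x]; simp)
    (fun k => by
      change twist i (c k) 1 0 = 0 ∧ twist i (c k) 1 1 = c k
      rw [twist, lift_c]; simp)
  exact hB.ge (Algebra.mem_top (x := a))

lemma sig_add (i : Fin (n - 1)) (a b : LC F n) : sig i (a + b) = sig i a + sig i b := by
  simp [sig]
lemma sig_smul (i : Fin (n - 1)) (r : F) (a : LC F n) : sig i (r • a) = r • sig i a := by
  simp [sig]
lemma sig_neg (i : Fin (n - 1)) (a : LC F n) : sig i (-a) = -sig i a := by simp [sig]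
lemma sig_sub (i : Fin (n - 1)) (a b : LC F n) : sig i (a - b) = sig i a - sig i b := by
  simp [sig]
lemma sig_zero (i : Fin (n - 1)) : sig i (0 : LC F n) = 0 := by simp [sig]
lemma sig_one (i : Fin (n - 1)) : sig i (1 : LC F n) = 1 := by simp [sig]
lemma sig_mul (i : Fin (n - 1)) (a b : LC F n) : sig i (a * b) = sig i a * sig i b := by
  simp [sig, Matrix.mul_apply, Fin.sum_univ_two, twist_lower i b]
lemma sig_x (i : Fin (n - 1)) (k : Fin n) : sig i (x k : LC F n) = x (s i k) := by
  rw [sig, twist, lift_x]; simp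
lemma sig_c (i : Fin (n - 1)) (k : Fin n) : sig i (c k : LC F n) = c (s i k) := by
  rw [sig, twist, lift_c]; simp

lemma del_add (i : Fin (n - 1)) (a b : LC F n) : del i (a + b) = del i a + del i b := by
  simp [del]
lemma del_smul (i : Fin (n - 1)) (r : F) (a : LC F n) : del i (r • a) = r • del i a := by
  simp [del]
lemma del_neg (i : Fin (n - 1)) (a : LC F n) : del i (-a) = -del i a := by simp [del]
lemma del_sub (i : Fin (n - 1)) (a b : LC F n) : del i (a - b) = del i a - del i b := by
  simp [del]
lemma del_zero (i : Fin (n - 1)) : del i (0 : LC F n) = 0 := by simp [del]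
lemma del_one (i : Fin (n - 1)) : del i (1 : LC F n) = 0 := by simp [del]
lemma del_mul (i : Fin (n - 1)) (a b : LC F n) :
    del i (a * b) = sig i a * del i b + del i a * b := by
  simp [sig, del, Matrix.mul_apply, Fin.sum_univ_two, twist_lower i b]
lemma del_x (i : Fin (n - 1)) (k : Fin n) : del i (x k : LC F n) = delX i k := by
  rw [del, twist, lift_x]; simp
lemma del_c (i : Fin (n - 1)) (k : Fin n) : del i (c k : LC F n) = delC i k := by
  rw [del, twist, lift_c]; simp

/-- `IsGen g` says that `g` is one of the generators `x k`, `c k`. -/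
def IsGen (g : LC F n) : Prop := ∃ k, g = x k ∨ g = c k

attribute [local simp] mul_add add_mul mul_sub sub_mul mul_assoc c_mul_x c_mul_y c_mul_x_assoc
  c_mul_y_assoc c_mul_c c_mul_c_mul c_mul_x_self c_mul_y_self c_mul_x_self_assoc c_mul_y_self_assoc
  x_mul_y y_mul_x x_mul_y_assoc y_mul_x_assoc
lemma sig_gen_of_ne (i : Fin (n - 1)) {k : Fin n} (h1 : k ≠ lo i) (h2 : k ≠ hi i) :
    sig i (x k : LC F n) = x k ∧ sig i (c k : LC F n) = c k ∧ del i (x k : LC F n) = 0 ∧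
      del i (c k : LC F n) = 0 := by
  simp [sig_x, sig_c, del_x, del_c, s_of_ne i h1 h2, delX_of_ne h1 h2, delC_of_ne h2]

lemma sig_gen_lo (i : Fin (n - 1)) :
    sig i (x (lo i) : LC F n) = x (hi i) ∧ sig i (c (lo i) : LC F n) = c (hi i) ∧
      del i (x (lo i) : LC F n) = -(x (hi i) + c (lo i) * c (hi i) * x (lo i)) ∧
      del i (c (lo i) : LC F n) = 0 := by
  simp [sig_x, sig_c, del_x, del_c, s_lo, delX_lo, delC_lo]

lemma sig_gen_hi (i : Fin (n - 1)) :
    sig i (x (hi i) : LC F n) = x (lo i) ∧ sig i (c (hi i) : LC F n) = c (lo i) ∧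
      del i (x (hi i) : LC F n) = x (hi i) - c (lo i) * c (hi i) * x (hi i) ∧
      del i (c (hi i) : LC F n) = c (hi i) - c (lo i) := by
  simp [sig_x, sig_c, del_x, del_c, s_hi, delX_hi, delC_hi]

lemma quadratic_gen (i : Fin (n - 1)) {g : LC F n} (hg : IsGen g) :
    sig i (sig i g) = g ∧ del i (del i g) = del i g ∧
      del i (sig i g) + sig i (del i g) = sig i g - g := by
  have hab := lo_ne_hi i
  have hba := hab.symm
  obtain ⟨a1, a2, a3, a4⟩ := sig_gen_lo (F := F) i
  obtain ⟨b1, b2, b3, b4⟩ := sig_gen_hi (F := F) i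
  obtain ⟨k, hg⟩ := hg
  rcases or_assoc.mpr (node_cases i k) with h | ⟨h3, h4⟩
  · generalize lo i = a at *
    generalize hi i = b at *
    rcases h with rfl | rfl <;> rcases hg with rfl | rfl <;>
    simp only [a1, a2, a3, a4, b1, b2, b3, b4, sig_add, sig_neg, sig_sub, sig_zero,
      sig_mul, del_add, del_neg, del_sub, del_zero, del_mul] <;>
    refine ⟨?_, ?_, ?_⟩ <;>
    simp [hab, hba, c_anti hba, c_anti_assoc hba] <;> abel
  · obtain ⟨d1, d2, d3, d4⟩ := sig_gen_of_ne (F := F) i h3 h4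
    rcases hg with rfl | rfl <;> simp [d1, d2, d3, d4, sig_zero, del_zero]

lemma braid_gen {i j : Fin (n - 1)} (hij : (j : ℕ) = i + 1) {g : LC F n} (hg : IsGen g) :
    sig i (sig j (sig i g)) = sig j (sig i (sig j g)) ∧
    del i (sig j (sig i g)) = sig j (sig i (del j g)) ∧
    sig i (sig j (del i g)) = del j (sig i (sig j g)) ∧
    sig i (del j (sig i g)) = sig j (del i (sig j g)) ∧
    sig i (del j (sig i g)) + del i (del j (sig i g)) + sig i (del j (del i g)) =
      del j (sig i (del j g)) ∧
    sig j (del i (sig j g)) + del j (del i (sig j g)) + sig j (del i (del j g)) =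
      del i (sig j (del i g)) ∧
    del i (del j (del i g)) = del j (del i (del j g)) := by
  have hac : lo i ≠ hi j := by simp [lo, hi, Fin.ext_iff]; omega
  have hb : lo j = hi i := by simp [lo, hi, Fin.ext_iff]; omega
  have hab := lo_ne_hi i
  have hbc := lo_ne_hi j
  have hlo : lo i ≠ lo j := hb ▸ hab
  have hhi : hi j ≠ hi i := hb ▸ hbc.symm
  obtain ⟨a1, a2, a3, a4⟩ := sig_gen_lo (F := F) i
  obtain ⟨b1, b2, b3, b4⟩ := sig_gen_hi (F := F) i
  obtain ⟨c1, c2, c3, c4⟩ := sig_gen_of_ne (F := F) i hac.symm hhi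
  obtain ⟨d1, d2, d3, d4⟩ := sig_gen_of_ne (F := F) j hlo hac
  obtain ⟨e1, e2, e3, e4⟩ := sig_gen_lo (F := F) j
  obtain ⟨f1, f2, f3, f4⟩ := sig_gen_hi (F := F) j
  have cases : ∀ k : Fin n,
      (k = lo i ∨ k = hi i ∨ k = hi j) ∨ (k ≠ lo i ∧ k ≠ hi i ∧ k ≠ hi j) := by
    tauto
  have other := fun (k : Fin n) (h2 : k ≠ hi i) => sig_gen_of_ne (F := F) j (k := k) (hb ▸ h2)
  have hba := hab.symm
  have hcb := hbc.symm
  have hca := hac.symm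
  rw [hb] at *
  obtain ⟨k, hg⟩ := hg
  rcases cases k with h | ⟨h1, h2, h3⟩
  · generalize lo i = a at *
    generalize hi i = b at *
    generalize hi j = d at *
    rcases h with rfl | rfl | rfl <;> rcases hg with rfl | rfl <;>
    simp only [a1, a2, a3, a4, b1, b2, b3, b4, c1, c2, c3, c4, d1, d2, d3, d4, e1, e2, e3, e4,
      f1, f2, f3, f4, sig_add, sig_neg, sig_sub, sig_zero,
      sig_mul, del_add, del_neg, del_sub, del_zero, del_mul] <;>
    refine ⟨?_, ?_, ?_, ?_, ?_, ?_, ?_⟩ <;>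
    simp [hab, hba, hac, hca, hbc, hcb, c_anti hba, c_anti_assoc hba,
      c_anti_assoc hca, c_anti hcb, c_anti_assoc hcb] <;> abel
  · obtain ⟨g1, g2, g3, g4⟩ := sig_gen_of_ne (F := F) i h1 h2
    obtain ⟨k1, k2, k3, k4⟩ := other k h2 h3
    rcases hg with rfl | rfl <;> simp [g1, g2, g3, g4, k1, k2, k3, k4, sig_zero, del_zero]

end LC

end TwistedDerivations

section PermutationModule
open Equiv
namespace LC
variable {F} {n : ℕ}

lemma far_gen_of_ne {i j : Fin (n - 1)} (h : (i : ℕ) + 1 < j ∨ (j : ℕ) + 1 < i) {k : Fin n}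
    (h1 : k ≠ lo j) (h2 : k ≠ hi j) {g : LC F n} (hg : g = x k ∨ g = c k) :
    sig j g = g ∧ del j g = 0 ∧ sig j (sig i g) = sig i g ∧ del j (sig i g) = 0 ∧
      sig j (del i g) = del i g ∧ del j (del i g) = 0 := by
  have e1 : lo i ≠ lo j := by simp [lo, Fin.ext_iff]; omega
  have e2 : lo i ≠ hi j := by simp [lo, hi, Fin.ext_iff]; omega
  have e3 : hi i ≠ lo j := by simp [lo, hi, Fin.ext_iff]; omega
  have e4 : hi i ≠ hi j := by simp [hi, Fin.ext_iff]; omega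
  obtain ⟨a1, a2, a3, a4⟩ := sig_gen_lo (F := F) i
  obtain ⟨b1, b2, b3, b4⟩ := sig_gen_hi (F := F) i
  obtain ⟨c1, c2, c3, c4⟩ := sig_gen_of_ne (F := F) j e1 e2
  obtain ⟨d1, d2, d3, d4⟩ := sig_gen_of_ne (F := F) j e3 e4
  obtain ⟨f1, f2, f3, f4⟩ := sig_gen_of_ne (F := F) j h1 h2
  rcases node_cases i k with rfl | rfl | ⟨h3, h4⟩
  · rcases hg with rfl | rfl <;>
    simp [a1, a2, a3, a4, c1, c2, c3, c4, d1, d2, d3, d4, sig_add, sig_neg, sig_zero, sig_mul,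
      del_add, del_neg, del_zero, del_mul]
  · rcases hg with rfl | rfl <;>
    simp [b1, b2, b3, b4, c1, c2, c3, c4, d1, d2, d3, d4, sig_sub, sig_mul, del_sub, del_mul]
  · obtain ⟨g1, g2, g3, g4⟩ := sig_gen_of_ne (F := F) i h3 h4
    rcases hg with rfl | rfl <;>
    simp [f1, f2, f3, f4, g1, g2, g3, g4, sig_zero, del_zero]

lemma far_gen {i j : Fin (n - 1)} (h : (i : ℕ) + 1 < j) {g : LC F n} (hg : IsGen g) :
    sig i (sig j g) = sig j (sig i g) ∧ del i (sig j g) = sig j (del i g) ∧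
      sig i (del j g) = del j (sig i g) ∧ del i (del j g) = del j (del i g) := by
  obtain ⟨k, hg⟩ := hg
  by_cases hk : k = lo j ∨ k = hi j
  · have h1 : k ≠ lo i := by rcases hk with rfl | rfl <;> simp [lo, hi, Fin.ext_iff] <;> omega
    have h2 : k ≠ hi i := by rcases hk with rfl | rfl <;> simp [lo, hi, Fin.ext_iff] <;> omega
    obtain ⟨e1, e2, e3, e4, e5, e6⟩ := far_gen_of_ne (Or.inr h) h1 h2 hg
    simp [e1, e2, e3, e4, e5, e6, sig_zero, del_zero]
  · push Not at hk
    obtain ⟨e1, e2, e3, e4, e5, e6⟩ := far_gen_of_ne (Or.inl h) hk.1 hk.2 hg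
    simp [e1, e2, e3, e4, e5, e6, sig_zero, del_zero]

end LC

lemma s_mul_s_eq {n : ℕ} (i j : Fin (n - 1)) :
    s i * s j = swap (s i (lo j)) (s i (hi j)) * s i := mul_swap_eq_swap_mul _ _ _

lemma s_comm {n : ℕ} {i j : Fin (n - 1)} (h : (i : ℕ) + 1 < j) (w : Perm (Fin n)) :
    s i * (s j * w) = s j * (s i * w) := by
  have e1 : s i (lo j) = lo j := s_of_ne i (by simp [lo, Fin.ext_iff]; omega)
    (by simp [lo, hi, Fin.ext_iff]; omega)
  have e2 : s i (hi j) = hi j := s_of_ne i (by simp [lo, hi, Fin.ext_iff]; omega)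
    (by simp [hi, Fin.ext_iff]; omega)
  rw [← mul_assoc, s_mul_s_eq, e1, e2, mul_assoc, ← s.eq_1]

lemma s_braid {n : ℕ} {i j : Fin (n - 1)} (h : (j : ℕ) = i + 1) (w : Perm (Fin n)) :
    s i * (s j * (s i * w)) = s j * (s i * (s j * w)) := by
  have hb : lo j = hi i := by simp [lo, hi, Fin.ext_iff]; omega
  have e1 : s i (hi j) = hi j := s_of_ne i (by simp [lo, hi, Fin.ext_iff]; omega)
    (by simp [hi, Fin.ext_iff]; omega)
  have e2 : s j (lo i) = lo i := s_of_ne j (by simp [lo, Fin.ext_iff]; omega)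
    (by simp [lo, hi, Fin.ext_iff]; omega)
  rw [← mul_assoc (s i), ← mul_assoc (s j), s_mul_s_eq, s_mul_s_eq, e1, e2, ← hb, s_lo, hb, s_hi,
    mul_assoc, mul_assoc, s_mul_s_mul, s_mul_s_mul]

open LC

/-- The free left module over the Laurent–Clifford algebra on the symmetric group, on which
`H_n` acts. -/
abbrev PM (n : ℕ) : Type := Perm (Fin n) → LC F n

namespace PM
variable {F} {n : ℕ}

/-- Left multiplication by an element of the Laurent–Clifford algebra. -/
noncomputable def L : LC F n →ₐ[F] Module.End F (PM F n) := Algebra.lsmul F F (PM F n)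

lemma L_apply (a : LC F n) (f : PM F n) (w : Perm (Fin n)) : L a f w = a * f w := rfl

/-- The standard basis vectors. -/
noncomputable def e (w : Perm (Fin n)) : PM F n := Pi.single w 1

/-- The coefficient of `T_w` in `T_i T_w`. -/
def eta (ξ : F) (i : Fin (n - 1)) (w : Perm (Fin n)) : F :=
  if w⁻¹ (hi i) < w⁻¹ (lo i) then ξ else 0

/-- The operator by which `T_i` acts. -/
noncomputable def tau (ξ : F) (i : Fin (n - 1)) : Module.End F (PM F n) where
  toFun f w := sig i (f (s i * w)) + eta ξ i w • sig i (f w) + ξ • del i (f w)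
  map_add' f g := by
    funext w
    simp only [Pi.add_apply, sig_add, del_add, smul_add]
    abel
  map_smul' r f := by
    funext w
    simp only [Pi.smul_apply, sig_smul, del_smul, smul_add, RingHom.id_apply, smul_comm r]

lemma tau_apply (ξ : F) (i : Fin (n - 1)) (f : PM F n) (w : Perm (Fin n)) :
    tau ξ i f w = sig i (f (s i * w)) + eta ξ i w • sig i (f w) + ξ • del i (f w) := rfl

lemma tau_mul_L (ξ : F) (i : Fin (n - 1)) (a : LC F n) :
    tau ξ i * L a = L (sig i a) * tau ξ i + ξ • L (del i a) := by
  refine LinearMap.ext fun f => funext fun w => ?_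
  simp only [Module.End.mul_apply, LinearMap.add_apply, LinearMap.smul_apply, Pi.add_apply,
    Pi.smul_apply, tau_apply, L_apply, sig_mul, del_mul, mul_add, smul_add, mul_smul_comm]
  abel

lemma tau_mul_L_assoc (ξ : F) (i : Fin (n - 1)) (a : LC F n) (z : Module.End F (PM F n)) :
    tau ξ i * (L a * z) = L (sig i a) * (tau ξ i * z) + ξ • (L (del i a) * z) := by
  rw [← mul_assoc, tau_mul_L, add_mul, mul_assoc, smul_mul_assoc]

lemma tau_e (ξ : F) (i : Fin (n - 1)) (w : Perm (Fin n)) :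
    tau ξ i (e w) = e (s i * w) + eta ξ i w • e w := by
  funext v
  rw [tau_apply]
  have h : s i * v = w ↔ v = s i * w := by
    constructor
    · rintro rfl; rw [s_mul_s_mul]
    · rintro rfl; rw [s_mul_s_mul]
  simp only [e, Pi.add_apply, Pi.smul_apply, Pi.single_apply, h]
  split_ifs <;> simp_all [sig_zero, sig_one, del_zero, del_one]

lemma sum_L_e (f : PM F n) : f = ∑ w, L (f w) (e w) := by
  funext v
  simp [L_apply, e, Pi.single_apply]

/-- An operator twisted-commuting with multiplications by generators and killing the standard basis
vectors vanishes. -/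
lemma end_eq_zero (R : Module.End F (PM F n))
    (hR : ∀ g : LC F n, IsGen g → ∃ a', R * L g = L a' * R) (he : ∀ w, R (e w) = 0) : R = 0 := by
  let B : Subalgebra F (LC F n) :=
    { carrier := {a | ∃ a', R * L a = L a' * R}
      mul_mem' := by
        rintro a b ⟨a', ha⟩ ⟨b', hb⟩
        exact ⟨a' * b', by rw [map_mul, ← mul_assoc, ha, mul_assoc, hb, map_mul, mul_assoc]⟩
      add_mem' := by
        rintro a b ⟨a', ha⟩ ⟨b', hb⟩
        exact ⟨a' + b', by rw [map_add, mul_add, ha, hb, map_add, add_mul]⟩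
      algebraMap_mem' := fun r => ⟨algebraMap F _ r, by
        rw [AlgHom.commutes, Algebra.commutes]⟩ }
  have hB : B = ⊤ := adjoin_eq_top B (fun k => hR _ ⟨k, Or.inl rfl⟩) (fun k => hR _ ⟨k, Or.inr rfl⟩)
  refine LinearMap.ext fun f => ?_
  rw [sum_L_e f, map_sum, LinearMap.zero_apply]
  refine Finset.sum_eq_zero fun w _ => ?_
  obtain ⟨a', ha⟩ : f w ∈ B := hB ▸ Algebra.mem_top
  have := LinearMap.congr_fun ha (e w)
  simp only [Module.End.mul_apply, he, map_zero] at this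
  exact this

lemma eta_s_mul (ξ : F) (i j : Fin (n - 1)) (w : Perm (Fin n)) :
    eta ξ i (s j * w) = if w⁻¹ (s j (hi i)) < w⁻¹ (s j (lo i)) then ξ else 0 := by
  simp [eta, mul_inv_rev, s_inv]

lemma tau_mul_tau_self (ξ : F) (i : Fin (n - 1)) :
    tau (n := n) ξ i * tau ξ i = ξ • tau ξ i + 1 := by
  rw [← sub_eq_zero]
  refine end_eq_zero _ (fun g hg => ⟨g, ?_⟩) fun w => ?_
  · obtain ⟨h1, h2, h3⟩ := quadratic_gen i hg
    have h3 : L (del i (sig i g)) = L (sig i g) - L g - L (sig i (del i g)) := by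
      rw [← map_sub, ← map_sub, ← h3, add_sub_cancel_right]
    simp only [sub_mul, add_mul, mul_add, mul_sub, mul_assoc, tau_mul_L, tau_mul_L_assoc,
      smul_mul_assoc, mul_smul_comm, smul_add, smul_sub, one_mul, mul_one, h1, h2, h3]
    abel
  · simp only [LinearMap.sub_apply, LinearMap.add_apply, Module.End.mul_apply, LinearMap.smul_apply,
      tau_e, map_add, map_smul, s_mul_s_mul, Module.End.one_apply, eta_s_mul, s_lo, s_hi]
    rcases (inv_lo_ne_inv_hi i w).lt_or_gt with h | h
    · simp only [eta, if_pos h, if_neg h.not_gt, zero_smul, add_zero]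
      abel
    · simp only [eta, if_pos h, if_neg h.not_gt, zero_smul, add_zero, smul_add]
      abel

lemma tau_far (ξ : F) {i j : Fin (n - 1)} (h : (i : ℕ) + 1 < j) :
    tau (n := n) ξ i * tau ξ j = tau ξ j * tau ξ i := by
  rw [← sub_eq_zero]
  refine end_eq_zero _ (fun g hg => ⟨sig i (sig j g), ?_⟩) fun w => ?_
  · obtain ⟨h1, h2, h3, h4⟩ := far_gen h hg
    simp only [sub_mul, mul_add, mul_sub, mul_assoc, tau_mul_L, tau_mul_L_assoc,
      mul_smul_comm, smul_add, h1, h2, h3, h4]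
    abel
  · have e1 : s j (lo i) = lo i := s_of_ne j (by simp [lo, Fin.ext_iff]; omega)
      (by simp [lo, hi, Fin.ext_iff]; omega)
    have e2 : s j (hi i) = hi i := s_of_ne j (by simp [lo, hi, Fin.ext_iff]; omega)
      (by simp [hi, Fin.ext_iff]; omega)
    have e3 : s i (lo j) = lo j := s_of_ne i (by simp [lo, Fin.ext_iff]; omega)
      (by simp [lo, hi, Fin.ext_iff]; omega)
    have e4 : s i (hi j) = hi j := s_of_ne i (by simp [lo, hi, Fin.ext_iff]; omega)
      (by simp [hi, Fin.ext_iff]; omega)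
    simp only [LinearMap.sub_apply, Module.End.mul_apply, tau_e, map_add, map_smul, eta_s_mul,
      e1, e2, e3, e4, ← eta.eq_1, smul_add, ← mul_assoc, s_comm h, smul_comm (eta ξ i w)]
    abel

lemma tau_braid (ξ : F) {i j : Fin (n - 1)} (h : (j : ℕ) = i + 1) :
    tau (n := n) ξ i * tau ξ j * tau ξ i = tau ξ j * tau ξ i * tau ξ j := by
  rw [← sub_eq_zero]
  refine end_eq_zero _ (fun g hg => ⟨sig i (sig j (sig i g)), ?_⟩) fun w => ?_
  · obtain ⟨h1, h2, h3, h4, h5, h6, h7⟩ := braid_gen h hg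
    simp only [sub_mul, add_mul, mul_add, mul_sub, mul_assoc, tau_mul_L, tau_mul_L_assoc,
      mul_smul_comm, smul_add, tau_mul_tau_self, h1, h2, h3, h4, ← h5, ← h6, h7,
      map_add, mul_one]
    abel
  · have hb : lo j = hi i := by simp [lo, hi, Fin.ext_iff]; omega
    have e1 : s i (hi j) = hi j := s_of_ne i (by simp [lo, hi, Fin.ext_iff]; omega)
      (by simp [hi, Fin.ext_iff]; omega)
    have e2 : s j (lo i) = lo i := s_of_ne j (by simp [lo, Fin.ext_iff]; omega)
      (by simp [lo, hi, Fin.ext_iff]; omega)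
    have e3 : s j (hi i) = hi j := by rw [← hb, s_lo]
    have e4 : s j (hi j) = hi i := by rw [← hb, s_hi]
    have hs := s_braid h
    have h1 := inv_lo_ne_inv_hi i w
    have h2 := hb ▸ inv_lo_ne_inv_hi j w
    have h3 : w⁻¹ (lo i) ≠ w⁻¹ (hi j) := (w⁻¹).injective.ne (by simp [lo, hi, Fin.ext_iff]; omega)
    simp only [LinearMap.sub_apply, Module.End.mul_apply, tau_e, map_add, map_smul, eta,
      mul_inv_rev,
      s_inv, Perm.mul_apply, hb, e1, e2, e3, e4, s_lo, s_hi, s_mul_s_mul, hs]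
    generalize w⁻¹ (lo i) = a at *
    generalize w⁻¹ (hi i) = b at *
    generalize w⁻¹ (hi j) = d at *
    rcases h1.lt_or_gt with h1 | h1 <;> rcases h2.lt_or_gt with h2 | h2 <;>
      rcases h3.lt_or_gt with h3 | h3 <;>
      first
      | (exfalso; order)
      | (simp only [if_pos h1, if_neg h1.not_gt, if_pos h2, if_neg h2.not_gt, if_pos h3,
          if_neg h3.not_gt, zero_smul, add_zero, smul_add]
         abel)

end PM

end PermutationModule

section Representation
open Equiv
open LC

lemma len_one {n : ℕ} : len (1 : Perm (Fin n)) = 0 :=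
  Finset.card_eq_zero.mpr (Finset.filter_eq_empty_iff.mpr fun _ _ h => h.1.asymm h.2)

namespace PM
variable {F} {n : ℕ}

lemma tau_commute_of_ne (ξ : F) (i : Fin (n - 1)) {a : LC F n} (h1 : sig i a = a)
    (h2 : del i a = 0) : tau ξ i * L a = L a * tau ξ i := by
  rw [tau_mul_L, h1, h2, map_zero, smul_zero, add_zero]

lemma cross_of_quadratic {R : Type*} [Semiring R] [Algebra F R] {ξ : F} {t a b d : R}
    (ht : t * t = ξ • t + 1) (h : t * a + ξ • (b + d * a) = b * t) :
    (t + ξ • d) * a * t + ξ • (b * t) = b + ξ • (b * t) := by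
  have h' : (t * a + ξ • (b + d * a)) * t = b * (t * t) := by rw [h, mul_assoc]
  rw [ht] at h'
  simp only [mul_add, add_mul, smul_add, smul_mul_assoc, mul_smul_comm, mul_one] at h' ⊢
  rw [add_comm b, ← h']
  abel

lemma tau_cross (ξ : F) (i : Fin (n - 1)) :
    (tau ξ i + ξ • (L (c (lo i)) * L (c (hi i)))) * L (x (lo i)) * tau ξ i = L (x (hi i)) := by
  obtain ⟨h, -, h', -⟩ := sig_gen_lo (F := F) i
  have ht : tau ξ i * L (x (lo i)) +
      ξ • (L (x (hi i)) + L (c (lo i)) * L (c (hi i)) * L (x (lo i))) = L (x (hi i)) * tau ξ i := by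
    rw [tau_mul_L, h, h', ← map_mul, ← map_mul, ← map_add, add_assoc, ← smul_add, ← map_add,
      neg_add_cancel, map_zero, smul_zero, add_zero]
  have key := cross_of_quadratic (R := Module.End F (PM F n)) (ξ := ξ) (t := tau ξ i)
    (a := L (x (lo i))) (b := L (x (hi i))) (d := L (c (lo i)) * L (c (hi i)))
    (tau_mul_tau_self ξ i) ht
  exact add_right_cancel key

variable (F)

/-- The representation of `H_n` on the free module `PM F n`. -/
noncomputable def rho (q : F) (n : ℕ) : H F q n →ₐ[F] Module.End F (PM F n) :=
  RingQuot.liftAlgHom F ⟨FreeAlgebra.lift F (fun g => match g with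
    | .X i => L (x i)
    | .Xinv i => L (y i)
    | .C i => L (c i)
    | .T i => tau (q - q⁻¹) i), by
    intro a b h
    cases h <;> simp only [fx, fxinv, fc, ft, map_mul, map_add, map_one, map_neg, map_smul,
      FreeAlgebra.lift_ι_apply]
    case XXinv i => rw [← map_mul, x_mul_y, map_one]
    case XinvX i => rw [← map_mul, y_mul_x, map_one]
    case XX i j => rw [← map_mul, x_comm, map_mul]
    case XiXi i j => rw [← map_mul, y_comm, map_mul]
    case XXi i j h => rw [← map_mul, x_mul_y_comm, map_mul]
    case CC i => rw [← map_mul, c_mul_c, map_one]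
    case Canti i j h => rw [← map_mul, c_anti h, map_neg, map_mul]
    case CX i => rw [← map_mul, c_mul_x_self, map_mul]
    case CXi i => rw [← map_mul, c_mul_y_self, map_mul]
    case CXo i j h => rw [← map_mul, c_mul_x h, map_mul]
    case CXio i j h => rw [← map_mul, c_mul_y h, map_mul]
    case Tquad i => exact tau_mul_tau_self _ i
    case Tbraid i j h => exact tau_braid _ h
    case TTfar i j h => exact tau_far _ h
    case TC i =>
      obtain ⟨-, h, -, h'⟩ := sig_gen_lo (F := F) i
      rw [tau_mul_L, h, h', map_zero, smul_zero, add_zero]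
    case TCo i j h1 h2 =>
      obtain ⟨-, h, -, h'⟩ := sig_gen_of_ne (F := F) i h1 h2
      exact tau_commute_of_ne _ i h h'
    case TXo i j h1 h2 =>
      obtain ⟨h, -, h', -⟩ := sig_gen_of_ne (F := F) i h1 h2
      exact tau_commute_of_ne _ i h h'
    case TXio i j h1 h2 =>
      obtain ⟨h, k, h', k'⟩ := sig_gen_of_ne (F := F) i h1 h2
      refine tau_commute_of_ne _ i ?_ ?_
      · rw [y, sig_mul, sig_mul, h, k]
      · rw [y, del_mul, del_mul, h', k']; simp
    case cross i =>
      exact tau_cross _ i⟩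

variable {F}

lemma rho_X (q : F) (i : Fin n) : rho F q n (X F q i) = L (x i) :=
  (RingQuot.liftAlgHom_mkAlgHom_apply _ _ _ _).trans (FreeAlgebra.lift_ι_apply _ _)

lemma rho_Xinv (q : F) (i : Fin n) : rho F q n (Xinv F q i) = L (y i) :=
  (RingQuot.liftAlgHom_mkAlgHom_apply _ _ _ _).trans (FreeAlgebra.lift_ι_apply _ _)

lemma rho_C (q : F) (i : Fin n) : rho F q n (C F q i) = L (c i) :=
  (RingQuot.liftAlgHom_mkAlgHom_apply _ _ _ _).trans (FreeAlgebra.lift_ι_apply _ _)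

lemma rho_T (q : F) (i : Fin (n - 1)) : rho F q n (T F q i) = tau (q - q⁻¹) i :=
  (RingQuot.liftAlgHom_mkAlgHom_apply _ _ _ _).trans (FreeAlgebra.lift_ι_apply _ _)

lemma rho_Tw (q : F) {Tw : Perm (Fin n) → H F q n} (hTw : IsTFam F q Tw) (w : Perm (Fin n)) :
    rho F q n (Tw w) (e 1) = e w := by
  induction hl : len w generalizing w with
  | zero =>
    by_cases hw : w = 1
    · subst hw; rw [hTw.1, map_one, Module.End.one_apply]
    · obtain ⟨i, hi⟩ := exists_left_descent hw
      omega
  | succ m ih =>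
    obtain ⟨i, hd⟩ := exists_left_descent (w := w) (by rintro rfl; rw [len_one] at hl; omega)
    have hw : s i * (s i * w) = w := s_mul_s_mul i w
    have h := hTw.2.2 i (s i * w) (by rw [hw]; exact hd)
    rw [hw] at h
    rw [h, map_mul, Module.End.mul_apply, ih (s i * w) (by omega), rho_T, tau_e, hw, eta, if_neg,
      zero_smul, add_zero]
    intro hlt
    have := len_s_mul_of_gt i _ hlt
    rw [hw] at this
    omega

end PM

namespace LC
variable {n : ℕ}

/-- The index set of the monomial basis of the Laurent–Clifford algebra. -/
abbrev Idx (n : ℕ) : Type := (Fin n → ℤ) × (Fin n → Bool)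

/-- The sign picked up by moving `c k` past the `c j` with `j < k` in the monomial of index `b`. -/
def sgn (k : Fin n) (b : Fin n → Bool) : F := ∏ j ∈ Finset.Iio k, if b j then -1 else 1

variable {F}

lemma sgn_update_of_le {k l : Fin n} (h : k ≤ l) (b : Fin n → Bool) (t : Bool) :
    sgn F k (Function.update b l t) = sgn F k b :=
  Finset.prod_congr rfl fun j hj => by
    rw [Function.update_of_ne ((Finset.mem_Iio.mp hj).trans_le h).ne]

lemma sgn_update_of_lt {k l : Fin n} (h : l < k) (b : Fin n → Bool) :
    sgn F k (Function.update b l (!b l)) = -sgn F k b := by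
  rw [sgn, sgn, ← Finset.mul_prod_erase _ _ (Finset.mem_Iio.mpr h),
    ← Finset.mul_prod_erase _ _ (Finset.mem_Iio.mpr h), ← neg_mul]
  congr 1
  · cases h : b l <;> simp
  · exact Finset.prod_congr rfl fun j hj => by
      rw [Function.update_of_ne (Finset.ne_of_mem_erase hj)]

lemma sgn_mul_self (k : Fin n) (b : Fin n → Bool) : sgn F k b * sgn F k b = 1 := by
  rw [sgn, ← Finset.prod_mul_distrib]
  exact Finset.prod_eq_one fun j _ => by split_ifs <;> simp

/-- The operator by which `x k` acts on functions on monomial indices. -/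
def opX (k : Fin n) : Module.End F (Idx n → F) where
  toFun f p := f (Function.update p.1 k (p.1 k - 1), p.2)
  map_add' _ _ := rfl
  map_smul' _ _ := rfl

/-- The operator by which `c k` acts on functions on monomial indices. -/
def opC (k : Fin n) : Module.End F (Idx n → F) where
  toFun f p := sgn F k p.2 * f (Function.update p.1 k (-p.1 k), Function.update p.2 k (!p.2 k))
  map_add' f g := by funext p; simp [mul_add]
  map_smul' r f := by funext p; simp [mul_left_comm]

lemma opX_apply (k : Fin n) (f : Idx n → F) (p : Idx n) :
    opX k f p = f (Function.update p.1 k (p.1 k - 1), p.2) := rfl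

lemma opC_apply (k : Fin n) (f : Idx n → F) (p : Idx n) : opC k f p =
    sgn F k p.2 * f (Function.update p.1 k (-p.1 k), Function.update p.2 k (!p.2 k)) := rfl

lemma opC_anti_of_lt {i j : Fin n} (h : i < j) :
    (opC i * opC j : Module.End F (Idx n → F)) = -(opC j * opC i) := by
  refine LinearMap.ext fun f => funext fun p => ?_
  simp only [Module.End.mul_apply, LinearMap.neg_apply, Pi.neg_apply, opC_apply,
    sgn_update_of_lt h, sgn_update_of_le h.le, Function.update_of_ne h.ne,
    Function.update_of_ne h.ne', Function.update_comm h.ne]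
  ring

variable (F n)

/-- The representation of the Laurent–Clifford algebra on functions on monomial indices. -/
noncomputable def mrep : LC F n →ₐ[F] Module.End F (Idx n → F) :=
  lift F opX opC
    (fun i j => by
      refine LinearMap.ext fun f => funext fun p => ?_
      obtain rfl | h := eq_or_ne i j
      · rfl
      · simp only [Module.End.mul_apply, opX_apply, Function.update_of_ne h,
          Function.update_of_ne h.symm, Function.update_comm h])
    (fun i => by
      refine LinearMap.ext fun f => funext fun p => ?_
      simp [opC_apply, sgn_update_of_le, ← mul_assoc, sgn_mul_self])
    (fun i j h => by
      rcases h.lt_or_gt with h | h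
      · exact opC_anti_of_lt h
      · rw [opC_anti_of_lt h, neg_neg])
    (fun i j h => by
      refine LinearMap.ext fun f => funext fun p => ?_
      simp only [Module.End.mul_apply, opX_apply, opC_apply, Function.update_of_ne h,
          Function.update_of_ne h.symm, Function.update_comm h])
    (fun i => by
      refine LinearMap.ext fun f => funext fun p => ?_
      simp [opX_apply, opC_apply, sgn_update_of_le, ← mul_assoc, sgn_mul_self])

variable {F n}

lemma mrep_x_single (k : Fin n) (p : Idx n) :
    mrep F n (x k) (Pi.single p 1) = Pi.single (Function.update p.1 k (p.1 k + 1), p.2) 1 := by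
  rw [mrep, lift_x]
  funext r
  rw [opX_apply, Pi.single_apply, Pi.single_apply]
  refine if_congr ⟨?_, ?_⟩ rfl rfl
  · rintro rfl; simp
  · rintro rfl; simp

lemma mrep_c_single (k : Fin n) (p : Idx n) :
    mrep F n (c k) (Pi.single p 1) =
      sgn F k p.2 •
        Pi.single (Function.update p.1 k (-p.1 k), Function.update p.2 k (!p.2 k)) 1 := by
  rw [mrep, lift_c]
  funext r
  rw [opC_apply, Pi.single_apply, Pi.smul_apply, Pi.single_apply, smul_eq_mul]
  by_cases h : r = (Function.update p.1 k (-p.1 k), Function.update p.2 k (!p.2 k))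
  · subst h; simp [sgn_update_of_le]
  · rw [if_neg h, if_neg, mul_zero, mul_zero]
    rintro rfl
    exact h (by simp)

lemma mrep_y_single (k : Fin n) (p : Idx n) :
    mrep F n (y k) (Pi.single p 1) = Pi.single (Function.update p.1 k (p.1 k - 1), p.2) 1 := by
  have h := mrep_x_single (F := F) k (Function.update p.1 k (p.1 k - 1), p.2)
  simp only [Function.update_self, Function.update_idem, sub_add_cancel, Function.update_eq_self]
    at h
  rw [← h, ← Module.End.mul_apply, ← map_mul, y_mul_x, map_one, Module.End.one_apply]

end LC

end Representation

section Independence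
open Equiv
open LC PM

namespace LC
variable {F} {n : ℕ}

lemma mrep_x_pow_single (k : Fin n) (m : ℕ) (p : Idx n) :
    mrep F n (x k ^ m) (Pi.single p 1) = Pi.single (Function.update p.1 k (p.1 k + m), p.2) 1 := by
  induction m with
  | zero => simp
  | succ m ih =>
    rw [pow_succ', map_mul, Module.End.mul_apply, ih, mrep_x_single]
    simp [add_assoc]

lemma mrep_y_pow_single (k : Fin n) (m : ℕ) (p : Idx n) :
    mrep F n (y k ^ m) (Pi.single p 1) = Pi.single (Function.update p.1 k (p.1 k - m), p.2) 1 := by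
  induction m with
  | zero => simp
  | succ m ih =>
    rw [pow_succ', map_mul, Module.End.mul_apply, ih, mrep_y_single]
    simp [sub_sub]

end LC

variable {F} {n : ℕ}

lemma exists_rho_XZ (q : F) (k : Fin n) (m : ℤ) :
    ∃ a : LC F n, rho F q n (XZ F q k m) = L a ∧ ∀ p : Idx n,
      mrep F n a (Pi.single p 1) = Pi.single (Function.update p.1 k (p.1 k + m), p.2) 1 := by
  by_cases h : 0 ≤ m
  · refine ⟨x k ^ m.toNat, ?_, fun p => ?_⟩
    · rw [XZ, if_pos h, map_pow, rho_X, map_pow]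
    · rw [mrep_x_pow_single, Int.toNat_of_nonneg h]
  · refine ⟨y k ^ (-m).toNat, ?_, fun p => ?_⟩
    · rw [XZ, if_neg h, map_pow, rho_Xinv, map_pow]
    · rw [mrep_y_pow_single, Int.toNat_of_nonneg (by omega), sub_neg_eq_add]

lemma exists_rho_Xmon_list (q : F) (α : Fin n → ℤ) (l : List (Fin n)) (hl : l.Nodup) :
    ∃ a : LC F n, rho F q n (l.map fun i => XZ F q i (α i)).prod = L a ∧ ∀ p : Idx n,
      mrep F n a (Pi.single p 1) =
        Pi.single (fun k => if k ∈ l then p.1 k + α k else p.1 k, p.2) 1 := by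
  induction l with
  | nil => exact ⟨1, by simp, fun p => by simp⟩
  | cons k l ih =>
    obtain ⟨hk, hl⟩ := List.nodup_cons.mp hl
    obtain ⟨a, ha, ha'⟩ := ih hl
    obtain ⟨b, hb, hb'⟩ := exists_rho_XZ q k (α k)
    refine ⟨b * a, by rw [List.map_cons, List.prod_cons, map_mul, ha, hb, map_mul], fun p => ?_⟩
    rw [map_mul, Module.End.mul_apply, ha', hb']
    congr 2
    funext j
    by_cases hj : j = k
    · subst hj; simp [hk]
    · simp [hj]

lemma exists_rho_Xmon (q : F) (α : Fin n → ℤ) :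
    ∃ a : LC F n, rho F q n (Xmon F q α) = L a ∧ ∀ b : Fin n → Bool,
      mrep F n a (Pi.single (0, b) 1) = Pi.single (α, b) 1 := by
  obtain ⟨a, ha, ha'⟩ := exists_rho_Xmon_list q α _ (List.nodup_finRange n)
  exact ⟨a, ha, fun b => by simpa using ha' (0, b)⟩

lemma exists_rho_Cmon_list (q : F) (β : Fin n → Bool) (l : List (Fin n)) (hl : l.Pairwise (· < ·)) :
    ∃ a : LC F n, rho F q n (l.map fun i => if β i then C F q i else 1).prod = L a ∧
      mrep F n a (Pi.single (0, fun _ => false) 1) =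
        Pi.single (0, fun k => decide (k ∈ l) && β k) 1 := by
  induction l with
  | nil => exact ⟨1, by simp, by simp⟩
  | cons k l ih =>
    obtain ⟨hk, hl⟩ := List.pairwise_cons.mp hl
    obtain ⟨a, ha, ha'⟩ := ih hl
    have hkl : k ∉ l := fun h => (hk k h).false
    cases hβ : β k with
    | false =>
      refine ⟨a, by rw [List.map_cons, List.prod_cons, hβ, if_neg Bool.false_ne_true, one_mul, ha],
        ?_⟩
      rw [ha']
      congr 2
      funext j
      by_cases hj : j = k
      · subst hj; simp [hβ]
      · simp [hj]
    | true =>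
      refine ⟨c k * a, by rw [List.map_cons, List.prod_cons, map_mul, ha, hβ, if_pos rfl, rho_C,
        map_mul], ?_⟩
      rw [map_mul, Module.End.mul_apply, ha', mrep_c_single]
      have hs : sgn F k (fun k => decide (k ∈ l) && β k) = 1 :=
        Finset.prod_eq_one fun j hj => by
          have : j ∉ l := fun h => (hk j h).asymm (Finset.mem_Iio.mp hj)
          simp [this]
      rw [hs, one_smul]
      congr 2
      · simp
      · funext j
        by_cases hj : j = k
        · subst hj; simp [hβ, hkl]
        · simp [hj]

lemma exists_rho_Cmon (q : F) (β : Fin n → Bool) :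
    ∃ a : LC F n, rho F q n (Cmon F q β) = L a ∧
      mrep F n a (Pi.single (0, fun _ => false) 1) = Pi.single (0, β) 1 := by
  obtain ⟨a, ha, ha'⟩ := exists_rho_Cmon_list q β _ (List.pairwise_lt_finRange n)
  exact ⟨a, ha, by simpa using ha'⟩

/-- The coordinates of an element of `H_n` read off from its action on `e 1`. -/
noncomputable def coords (q : F) (n : ℕ) : H F q n →ₗ[F] (Idx n × Perm (Fin n) → F) where
  toFun h p := mrep F n (rho F q n h (e 1) p.2) (Pi.single (0, fun _ => false) 1) p.1
  map_add' a b := by funext p; simp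
  map_smul' r a := by funext p; simp

/-- The family `X^α C^β T_w`, over all `w`. -/
noncomputable def fullFam (q : F) (Tw : Perm (Fin n) → H F q n) (p : Idx n × Perm (Fin n)) :
    H F q n :=
  Xmon F q p.1.1 * Cmon F q p.1.2 * Tw p.2

lemma coords_fullFam (q : F) {Tw : Perm (Fin n) → H F q n} (hTw : IsTFam F q Tw)
    (p : Idx n × Perm (Fin n)) : coords q n (fullFam q Tw p) = Pi.single p 1 := by
  obtain ⟨⟨α, β⟩, w⟩ := p
  obtain ⟨a, ha, ha'⟩ := exists_rho_Xmon q α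
  obtain ⟨b, hb, hb'⟩ := exists_rho_Cmon q β
  funext r
  change mrep F n (rho F q n (Xmon F q α * Cmon F q β * Tw w) (e 1) r.2) _ r.1 = _
  rw [map_mul, map_mul, Module.End.mul_apply, rho_Tw q hTw, ha, hb, ← map_mul, PM.L_apply, e,
    Pi.single_apply, Pi.single_apply]
  by_cases hr : r.2 = w
  · rw [if_pos hr, mul_one, map_mul, Module.End.mul_apply, hb', ha', Pi.single_apply]
    exact if_congr (by rw [Prod.ext_iff (x := r)]; simp [hr]) rfl rfl
  · rw [if_neg hr, mul_zero, map_zero, if_neg (fun h => hr (by rw [h]))]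
    rfl

lemma linearIndependent_fullFam (q : F) {Tw : Perm (Fin n) → H F q n} (hTw : IsTFam F q Tw) :
    LinearIndependent F (fullFam q Tw) := by
  refine LinearIndependent.of_comp (coords q n) ?_
  have : coords q n ∘ fullFam q Tw = fun p => Pi.single p 1 := funext (coords_fullFam q hTw)
  rw [this]
  exact Pi.linearIndependent_single_one _ _

end Independence

section Subalgebras
open Equiv
variable {F} {n : ℕ}

section Relations
variable (q : F)

lemma mk_rel {q : F} {a b : FA F n} (h : Rel F q n a b) :
    RingQuot.mkAlgHom F (Rel F q n) a = RingQuot.mkAlgHom F (Rel F q n) b :=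
  RingQuot.mkAlgHom_rel F h

lemma X_mul_Xinv (i : Fin n) : X F q i * Xinv F q i = 1 := by
  simpa only [X, Xinv, map_mul, map_one] using mk_rel (Rel.XXinv (q := q) i)

lemma Xinv_mul_X (i : Fin n) : Xinv F q i * X F q i = 1 := by
  simpa only [X, Xinv, map_mul, map_one] using mk_rel (Rel.XinvX (q := q) i)

lemma X_comm (i j : Fin n) : X F q i * X F q j = X F q j * X F q i := by
  simpa only [X, map_mul] using mk_rel (Rel.XX (q := q) i j)

lemma C_mul_C (i : Fin n) : C F q i * C F q i = 1 := by
  simpa only [C, map_mul, map_one] using mk_rel (Rel.CC (q := q) i)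

lemma C_anti {i j : Fin n} (h : i ≠ j) :
    C F q i * C F q j = (-1 : F) • (C F q j * C F q i) := by
  have := mk_rel (Rel.Canti (q := q) i j h)
  rw [← neg_one_smul F, map_smul] at this
  simpa only [C, map_mul] using this

lemma C_mul_X (i : Fin n) : C F q i * X F q i = Xinv F q i * C F q i := by
  simpa only [C, X, Xinv, map_mul] using mk_rel (Rel.CX (q := q) i)

lemma C_mul_X_of_ne {i j : Fin n} (h : i ≠ j) : C F q i * X F q j = X F q j * C F q i := by
  simpa only [C, X, map_mul] using mk_rel (Rel.CXo (q := q) i j h)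

lemma T_mul_T (i : Fin (n - 1)) : T F q i * T F q i = (q - q⁻¹) • T F q i + 1 := by
  simpa only [T, map_mul, map_add, map_smul, map_one] using mk_rel (Rel.Tquad (q := q) i)

lemma T_mul_C_lo (i : Fin (n - 1)) : T F q i * C F q (lo i) = C F q (hi i) * T F q i := by
  simpa only [T, C, map_mul] using mk_rel (Rel.TC (q := q) i)

lemma T_mul_C_of_ne {i : Fin (n - 1)} {j : Fin n} (h1 : j ≠ lo i) (h2 : j ≠ hi i) :
    T F q i * C F q j = C F q j * T F q i := by
  simpa only [T, C, map_mul] using mk_rel (Rel.TCo (q := q) i j h1 h2)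

lemma T_mul_X_of_ne {i : Fin (n - 1)} {j : Fin n} (h1 : j ≠ lo i) (h2 : j ≠ hi i) :
    T F q i * X F q j = X F q j * T F q i := by
  simpa only [T, X, map_mul] using mk_rel (Rel.TXo (q := q) i j h1 h2)

lemma cross_rel (i : Fin (n - 1)) :
    (T F q i + (q - q⁻¹) • (C F q (lo i) * C F q (hi i))) * X F q (lo i) * T F q i =
      X F q (hi i) := by
  simpa only [T, X, C, map_mul, map_add, map_smul] using mk_rel (Rel.cross (q := q) i)

end Relations

section Monomials
variable (q : F)

/-- `X_i` as a unit of `H_n`. -/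
noncomputable def Xunit (i : Fin n) : (H F q n)ˣ :=
  ⟨X F q i, Xinv F q i, X_mul_Xinv q i, Xinv_mul_X q i⟩

lemma XZ_eq (i : Fin n) (m : ℤ) : XZ F q i m = ((Xunit q i ^ m : (H F q n)ˣ) : H F q n) := by
  rw [XZ]
  split_ifs with h
  · conv_rhs => rw [← Int.toNat_of_nonneg h]
    rw [zpow_natCast, Units.val_pow_eq_pow_val]
    rfl
  · have : m = -((-m).toNat : ℤ) := by omega
    conv_rhs => rw [this]
    rw [zpow_neg, zpow_natCast, ← inv_pow, Units.val_pow_eq_pow_val]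
    rfl

lemma X_mul_XZ (i : Fin n) (m : ℤ) : X F q i * XZ F q i m = XZ F q i (m + 1) := by
  rw [XZ_eq, XZ_eq, add_comm, zpow_one_add, Units.val_mul]
  rfl

lemma X_commute_XZ (i j : Fin n) (m : ℤ) : Commute (X F q i) (XZ F q j m) := by
  rw [XZ_eq]
  have h : Commute (X F q i) (Xunit q j : H F q n) := X_comm q i j
  exact h.units_zpow_right m

lemma C_commute_XZ {i j : Fin n} (h : i ≠ j) (m : ℤ) : Commute (C F q i) (XZ F q j m) := by
  rw [XZ_eq]
  have h' : Commute (C F q i) (Xunit q j : H F q n) := C_mul_X_of_ne q h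
  exact h'.units_zpow_right m

lemma C_semiconj_XZ (i : Fin n) (m : ℤ) : SemiconjBy (C F q i) (XZ F q i m) (XZ F q i (-m)) := by
  rw [XZ_eq, XZ_eq, ← inv_zpow']
  have h : SemiconjBy (C F q i) (Xunit q i : H F q n) ((Xunit q i)⁻¹ : (H F q n)ˣ) := C_mul_X q i
  exact h.units_zpow_right m

lemma X_mul_Xmon (i : Fin n) (α : Fin n → ℤ) :
    X F q i * Xmon F q α = Xmon F q (Function.update α i (α i + 1)) := by
  have key : ∀ l : List (Fin n), l.Nodup → i ∈ l →
      X F q i * (l.map fun k => XZ F q k (α k)).prod =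
        (l.map fun k => XZ F q k (Function.update α i (α i + 1) k)).prod := by
    intro l
    induction l with
    | nil => intro _ h; exact absurd h List.not_mem_nil
    | cons k l ih =>
      intro hl hi
      obtain ⟨hk, hl⟩ := List.nodup_cons.mp hl
      rw [List.map_cons, List.map_cons, List.prod_cons, List.prod_cons]
      obtain rfl | h := eq_or_ne i k
      · rw [← mul_assoc, X_mul_XZ, Function.update_self]
        congr 2
        refine List.map_congr_left fun j hj => ?_
        rw [Function.update_of_ne (ne_of_mem_of_not_mem hj hk)]
      · rw [← mul_assoc, (X_commute_XZ q i k (α k)).eq, mul_assoc,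
          ih hl ((List.mem_cons.mp hi).resolve_left h), Function.update_of_ne h.symm]
  exact key _ (List.nodup_finRange n) (List.mem_finRange i)

lemma C_semiconj_Xmon (i : Fin n) (α : Fin n → ℤ) :
    SemiconjBy (C F q i) (Xmon F q α) (Xmon F q (Function.update α i (-α i))) := by
  rw [Xmon, Xmon]
  induction List.finRange n with
  | nil => exact SemiconjBy.one_right _
  | cons k l ih =>
    rw [List.map_cons, List.map_cons, List.prod_cons, List.prod_cons]
    refine SemiconjBy.mul_right ?_ ih
    obtain rfl | h := eq_or_ne i k
    · rw [Function.update_self]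
      exact C_semiconj_XZ q i (α i)
    · rw [Function.update_of_ne h.symm]
      exact C_commute_XZ q h (α k)

lemma C_mul_Cmon (i : Fin n) (β : Fin n → Bool) :
    ∃ r : F, C F q i * Cmon F q β = r • Cmon F q (Function.update β i (!β i)) := by
  have key : ∀ l : List (Fin n), l.Nodup → i ∈ l → ∃ r : F,
      C F q i * (l.map fun k => if β k then C F q k else 1).prod =
        r • (l.map fun k => if Function.update β i (!β i) k then C F q k else 1).prod := by
    intro l
    induction l with
    | nil => intro _ h; exact absurd h List.not_mem_nil
    | cons k l ih =>
      intro hl hi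
      obtain ⟨hk, hl⟩ := List.nodup_cons.mp hl
      simp only [List.map_cons, List.prod_cons]
      obtain rfl | h := eq_or_ne i k
      · have : l.map (fun k => if Function.update β i (!β i) k then C F q k else 1) =
            l.map fun k => if β k then C F q k else 1 :=
          List.map_congr_left fun j hj => by
            rw [Function.update_of_ne (ne_of_mem_of_not_mem hj hk)]
        refine ⟨1, ?_⟩
        rw [this, one_smul, ← mul_assoc, Function.update_self]
        congr 1
        cases β i
        · simp
        · simp [C_mul_C]
      · obtain ⟨r, hr⟩ := ih hl ((List.mem_cons.mp hi).resolve_left h)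
        rw [Function.update_of_ne h.symm]
        cases β k
        · exact ⟨r, by simpa using hr⟩
        · refine ⟨(-1) * r, ?_⟩
          simp only [if_true]
          rw [← mul_assoc, C_anti q h, smul_mul_assoc, mul_assoc, hr, mul_smul_comm, smul_smul]
  exact key _ (List.nodup_finRange n) (List.mem_finRange i)

lemma Xinv_mul_Xmon (i : Fin n) (α : Fin n → ℤ) :
    Xinv F q i * Xmon F q α = Xmon F q (Function.update α i (α i - 1)) := by
  have h := X_mul_Xmon q i (Function.update α i (α i - 1))
  rw [Function.update_self, Function.update_idem, sub_add_cancel, Function.update_eq_self] at h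
  rw [← h, ← mul_assoc, Xinv_mul_X, one_mul]

end Monomials

section Laurent
variable (q : F)

/-- The subalgebra of `H_n` generated by all `X_i^{±1}` and `C_i`. -/
def XCalg (F : Type) [Field F] (q : F) (n : ℕ) : Subalgebra F (H F q n) :=
  Algebra.adjoin F
    ((Set.range fun i : Fin n => X F q i) ∪ (Set.range fun i : Fin n => Xinv F q i) ∪
      (Set.range fun i : Fin n => C F q i))

lemma X_mem_XCalg (i : Fin n) : X F q i ∈ XCalg F q n :=
  Algebra.subset_adjoin (Or.inl (Or.inl ⟨i, rfl⟩))

lemma Xinv_mem_XCalg (i : Fin n) : Xinv F q i ∈ XCalg F q n :=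
  Algebra.subset_adjoin (Or.inl (Or.inr ⟨i, rfl⟩))

lemma C_mem_XCalg (i : Fin n) : C F q i ∈ XCalg F q n :=
  Algebra.subset_adjoin (Or.inr ⟨i, rfl⟩)

lemma XZ_mem_XCalg (i : Fin n) (m : ℤ) : XZ F q i m ∈ XCalg F q n := by
  rw [XZ]
  split_ifs
  · exact pow_mem (X_mem_XCalg q i) _
  · exact pow_mem (Xinv_mem_XCalg q i) _

lemma Xmon_mem_XCalg (α : Fin n → ℤ) : Xmon F q α ∈ XCalg F q n := by
  refine list_prod_mem fun a ha => ?_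
  obtain ⟨i, -, rfl⟩ := List.mem_map.mp ha
  exact XZ_mem_XCalg q i (α i)

lemma Cmon_mem_XCalg (β : Fin n → Bool) : Cmon F q β ∈ XCalg F q n := by
  refine list_prod_mem fun a ha => ?_
  obtain ⟨i, -, rfl⟩ := List.mem_map.mp ha
  split_ifs
  · exact C_mem_XCalg q i
  · exact one_mem _

/-- The span of the monomials `X^α C^β`. -/
noncomputable def monSpan (F : Type) [Field F] (q : F) (n : ℕ) : Submodule F (H F q n) :=
  Submodule.span F (Set.range fun p : LC.Idx n => Xmon F q p.1 * Cmon F q p.2)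

lemma mem_monSpan (α : Fin n → ℤ) (β : Fin n → Bool) :
    Xmon F q α * Cmon F q β ∈ monSpan F q n :=
  Submodule.subset_span ⟨(α, β), rfl⟩

lemma mul_mem_monSpan {a : H F q n}
    (h : ∀ α β, a * (Xmon F q α * Cmon F q β) ∈ monSpan F q n) {m : H F q n}
    (hm : m ∈ monSpan F q n) : a * m ∈ monSpan F q n := by
  have : monSpan F q n ≤ (monSpan F q n).comap (LinearMap.mulLeft F a) := by
    refine Submodule.span_le.mpr ?_
    rintro _ ⟨⟨α, β⟩, rfl⟩
    exact h α β
  exact this hm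

lemma XCalg_mul_mem_monSpan {a m : H F q n} (ha : a ∈ XCalg F q n) (hm : m ∈ monSpan F q n) :
    a * m ∈ monSpan F q n := by
  induction ha using Algebra.adjoin_induction generalizing m with
  | mem a ha =>
    obtain (⟨i, rfl⟩ | ⟨i, rfl⟩) | ⟨i, rfl⟩ := ha
    · refine mul_mem_monSpan q (fun α β => ?_) hm
      rw [← mul_assoc, X_mul_Xmon]
      exact mem_monSpan q _ _
    · refine mul_mem_monSpan q (fun α β => ?_) hm
      rw [← mul_assoc, Xinv_mul_Xmon]
      exact mem_monSpan q _ _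
    · refine mul_mem_monSpan q (fun α β => ?_) hm
      obtain ⟨r, hr⟩ := C_mul_Cmon q i β
      rw [← mul_assoc, (C_semiconj_Xmon q i α).eq, mul_assoc, hr, mul_smul_comm]
      exact Submodule.smul_mem _ r (mem_monSpan q _ _)
  | algebraMap r =>
    rw [← Algebra.smul_def]
    exact Submodule.smul_mem _ r hm
  | add a b _ _ ha hb =>
    rw [add_mul]
    exact add_mem (ha hm) (hb hm)
  | mul a b _ _ ha hb =>
    rw [mul_assoc]
    exact ha (hb hm)

lemma one_mem_monSpan : (1 : H F q n) ∈ monSpan F q n := by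
  have h := mem_monSpan (F := F) (n := n) q 0 fun _ => false
  have h1 : Xmon F q (0 : Fin n → ℤ) = 1 :=
    List.prod_eq_one fun a ha => by
      obtain ⟨i, -, rfl⟩ := List.mem_map.mp ha
      simp [XZ]
  have h2 : Cmon F q (fun _ : Fin n => false) = 1 :=
    List.prod_eq_one fun a ha => by
      obtain ⟨i, -, rfl⟩ := List.mem_map.mp ha
      simp
  rwa [h1, h2, mul_one] at h

lemma mem_monSpan_of_mem_XCalg {a : H F q n} (ha : a ∈ XCalg F q n) : a ∈ monSpan F q n := by
  simpa only [mul_one] using XCalg_mul_mem_monSpan q ha (one_mem_monSpan q)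

end Laurent

end Subalgebras

section Straightening
open Equiv
variable {F} {n : ℕ}

section Straighten

variable {R : Type*} [Ring R] [Algebra F R] {t a b c d : R} {ξ : F}

lemma mul_sub_smul_one (ht : t * t = ξ • t + 1) : t * (t - ξ • 1) = 1 := by
  rw [mul_sub, ht, mul_smul_comm, mul_one, add_sub_cancel_left]

lemma sub_smul_one_mul (ht : t * t = ξ • t + 1) : (t - ξ • 1) * t = 1 := by
  rw [sub_mul, ht, smul_mul_assoc, one_mul, add_sub_cancel_left]

lemma mul_eq_of_mul_eq (ht : t * t = ξ • t + 1) (h : t * a = b * t) :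
    t * b = a * t + ξ • (b - a) := by
  have : (t - ξ • 1) * b = a * (t - ξ • 1) :=
    calc (t - ξ • 1) * b = (t - ξ • 1) * b * (t * (t - ξ • 1)) := by
          rw [mul_sub_smul_one ht, mul_one]
      _ = (t - ξ • 1) * (b * t) * (t - ξ • 1) := by simp only [mul_assoc]
      _ = (t - ξ • 1) * t * a * (t - ξ • 1) := by rw [← h]; simp only [mul_assoc]
      _ = a * (t - ξ • 1) := by rw [sub_smul_one_mul ht, one_mul]
  rw [sub_mul, mul_sub, smul_mul_assoc, one_mul, mul_smul_comm, mul_one, sub_eq_iff_eq_add] at this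
  rw [this, smul_sub]
  abel

lemma mul_lo_of_cross (ht : t * t = ξ • t + 1) (h : (t + ξ • (c * d)) * a * t = b) :
    t * a = b * t - ξ • b - ξ • (c * d * a) := by
  have : (t + ξ • (c * d)) * a = b * (t - ξ • 1) := by
    rw [← h, mul_assoc _ t, mul_sub_smul_one ht, mul_one]
  rw [add_mul, smul_mul_assoc, mul_sub, mul_smul_comm, mul_one] at this
  exact eq_sub_of_add_eq this

lemma mul_hi_of_cross (ht : t * t = ξ • t + 1) (hc : c * c = 1) (hd : d * d = 1)
    (hcd : c * d = -(d * c)) (htc : t * c = d * t) (h : (t + ξ • (c * d)) * a * t = b) :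
    t * b = a * t + ξ • b + ξ • (d * c * b) := by
  have h1 : t * (c * d) = d * c * t + ξ • (1 - d * c) := by
    rw [← mul_assoc, htc, mul_assoc, mul_eq_of_mul_eq ht htc, mul_add, mul_smul_comm, mul_sub, hd,
      mul_assoc]
  have h2 : t * (a * t) = b - ξ • (c * d * (a * t)) := by
    rw [← h, add_mul, add_mul, smul_mul_assoc, smul_mul_assoc, mul_assoc t, mul_assoc (c * d),
      add_sub_cancel_right]
  have h3 : d * c * (c * d) = 1 := by
    rw [mul_assoc, ← mul_assoc c, hc, one_mul, hd]
  calc t * b = t * t * (a * t) + ξ • (t * (c * d) * (a * t)) := by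
        rw [← h, add_mul, add_mul, mul_add, smul_mul_assoc, smul_mul_assoc, mul_smul_comm]
        simp only [mul_assoc]
    _ = ξ • (t * (a * t)) + a * t + ξ • (d * c * (t * (a * t)) +
          ξ • (a * t - d * c * (a * t))) := by
        rw [ht, h1]
        simp only [add_mul, sub_mul, smul_mul_assoc, one_mul, mul_assoc]
    _ = a * t + ξ • b + ξ • (d * c * b) := by
        rw [h2, mul_sub, mul_smul_comm, ← mul_assoc (d * c) (c * d), h3, hcd]
        simp only [smul_add, smul_sub, neg_mul, one_mul, smul_neg]
        abel

end Straighten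

section Commutation
variable (q : F)

lemma T_mul_C_hi (j : Fin (n - 1)) : T F q j * C F q (hi j) =
    C F q (lo j) * T F q j + (q - q⁻¹) • (C F q (hi j) - C F q (lo j)) :=
  mul_eq_of_mul_eq (R := H F q n) (T_mul_T q j) (T_mul_C_lo q j)

lemma T_mul_X_lo (j : Fin (n - 1)) : T F q j * X F q (lo j) = X F q (hi j) * T F q j -
    (q - q⁻¹) • X F q (hi j) - (q - q⁻¹) • (C F q (lo j) * C F q (hi j) * X F q (lo j)) :=
  mul_lo_of_cross (R := H F q n) (T_mul_T q j) (cross_rel q j)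

lemma C_anti_neg {i j : Fin n} (h : i ≠ j) :
    C F q i * C F q j = -(C F q j * C F q i) := by
  rw [C_anti q h]
  exact neg_one_smul F (M := H F q n) (C F q j * C F q i)

lemma T_mul_X_hi (j : Fin (n - 1)) : T F q j * X F q (hi j) = X F q (lo j) * T F q j +
    (q - q⁻¹) • X F q (hi j) + (q - q⁻¹) • (C F q (hi j) * C F q (lo j) * X F q (hi j)) :=
  mul_hi_of_cross (R := H F q n) (T_mul_T q j) (C_mul_C q _) (C_mul_C q _)
    (C_anti_neg q (lo_ne_hi j)) (T_mul_C_lo q j) (cross_rel q j)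

/-- If `t x = y t + r` then `t x⁻¹ = y⁻¹ t - y⁻¹ r x⁻¹`. -/
lemma mul_inv_of_mul_eq {R : Type*} [Ring R] {t x x' y y' r : R} (hx : x * x' = 1)
    (hy : y' * y = 1) (h : t * x = y * t + r) : t * x' = y' * t - y' * r * x' := by
  have : y' * (t * x) * x' = y' * (y * t + r) * x' := by rw [h]
  rw [mul_add, ← mul_assoc y' y, hy, one_mul, add_mul, mul_assoc y', mul_assoc t, hx, mul_one]
    at this
  rw [this, add_sub_cancel_right]

lemma T_mul_X (j : Fin (n - 1)) (k : Fin n) :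
    ∃ r ∈ XCalg F q n, T F q j * X F q k = X F q (s j k) * T F q j + r := by
  by_cases h1 : k = lo j
  · subst h1
    rw [s_lo, T_mul_X_lo]
    refine ⟨-((q - q⁻¹) • X F q (hi j)) -
      (q - q⁻¹) • (C F q (lo j) * C F q (hi j) * X F q (lo j)), sub_mem (neg_mem ?_) ?_, ?_⟩
    · exact Subalgebra.smul_mem _ (X_mem_XCalg q _) _
    · exact Subalgebra.smul_mem _ (mul_mem (mul_mem (C_mem_XCalg q _) (C_mem_XCalg q _))
        (X_mem_XCalg q _)) _
    · abel
  by_cases h2 : k = hi j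
  · subst h2
    rw [s_hi, T_mul_X_hi, add_assoc]
    refine ⟨_, add_mem ?_ ?_, rfl⟩
    · exact Subalgebra.smul_mem _ (X_mem_XCalg q _) _
    · exact Subalgebra.smul_mem _ (mul_mem (mul_mem (C_mem_XCalg q _) (C_mem_XCalg q _))
        (X_mem_XCalg q _)) _
  · rw [s_of_ne j h1 h2, T_mul_X_of_ne q h1 h2]
    exact ⟨0, zero_mem _, (add_zero _).symm⟩

lemma T_mul_C (j : Fin (n - 1)) (k : Fin n) :
    ∃ r ∈ XCalg F q n, T F q j * C F q k = C F q (s j k) * T F q j + r := by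
  by_cases h1 : k = lo j
  · subst h1
    rw [s_lo, T_mul_C_lo]
    exact ⟨0, zero_mem _, (add_zero _).symm⟩
  by_cases h2 : k = hi j
  · subst h2
    rw [s_hi, T_mul_C_hi]
    exact ⟨_, Subalgebra.smul_mem _ (sub_mem (C_mem_XCalg q _) (C_mem_XCalg q _)) _, rfl⟩
  · rw [s_of_ne j h1 h2, T_mul_C_of_ne q h1 h2]
    exact ⟨0, zero_mem _, (add_zero _).symm⟩

lemma T_mul_Xinv (j : Fin (n - 1)) (k : Fin n) :
    ∃ r ∈ XCalg F q n, T F q j * Xinv F q k = Xinv F q (s j k) * T F q j + r := by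
  obtain ⟨r, hr, h⟩ := T_mul_X q j k
  refine ⟨-(Xinv F q (s j k) * r * Xinv F q k), neg_mem (mul_mem (mul_mem (Xinv_mem_XCalg q _) hr)
    (Xinv_mem_XCalg q _)), ?_⟩
  rw [← sub_eq_add_neg]
  exact mul_inv_of_mul_eq (R := H F q n) (X_mul_Xinv q k) (Xinv_mul_X q _) h

lemma T_mul_XCalg (j : Fin (n - 1)) {a : H F q n} (ha : a ∈ XCalg F q n) :
    ∃ b ∈ XCalg F q n, ∃ r ∈ XCalg F q n, T F q j * a = b * T F q j + r := by
  induction ha using Algebra.adjoin_induction with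
  | mem a ha =>
    obtain (⟨i, rfl⟩ | ⟨i, rfl⟩) | ⟨i, rfl⟩ := ha
    · exact ⟨_, X_mem_XCalg q _, T_mul_X q j i⟩
    · exact ⟨_, Xinv_mem_XCalg q _, T_mul_Xinv q j i⟩
    · exact ⟨_, C_mem_XCalg q _, T_mul_C q j i⟩
  | algebraMap r =>
    refine ⟨_, Subalgebra.algebraMap_mem _ r, 0, zero_mem _, ?_⟩
    rw [add_zero, Algebra.commutes]
  | add a a' _ _ ha ha' =>
    obtain ⟨b, hb, r, hr, h⟩ := ha
    obtain ⟨b', hb', r', hr', h'⟩ := ha'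
    refine ⟨b + b', add_mem hb hb', r + r', add_mem hr hr', ?_⟩
    rw [mul_add, h, h', add_mul]
    exact add_add_add_comm _ _ _ _
  | mul a a' _ hm' ha ha' =>
    obtain ⟨b, hb, r, hr, h⟩ := ha
    obtain ⟨b', hb', r', hr', h'⟩ := ha'
    refine ⟨b * b', mul_mem hb hb', b * r' + r * a', add_mem (mul_mem hb hr') (mul_mem hr hm'), ?_⟩
    rw [← mul_assoc, h, add_mul, mul_assoc b, h', mul_add, mul_assoc, add_assoc]

end Commutation

end Straightening

section DoubleCosets
open Equiv
variable {F} {n : ℕ}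

lemma len_s_mul (i : Fin (n - 1)) (w : Perm (Fin n)) :
    len (s i * w) = len w + 1 ∨ len w = len (s i * w) + 1 :=
  (inv_lo_ne_inv_hi i w).lt_or_gt.imp (len_s_mul_of_lt i w) (len_s_mul_of_gt i w)

lemma len_mul_s (i : Fin (n - 1)) (w : Perm (Fin n)) :
    len (w * s i) = len w + 1 ∨ len w = len (w * s i) + 1 := by
  have h := len_s_mul i w⁻¹
  rwa [len_inv, ← len_inv (s i * w⁻¹), mul_inv_rev, inv_inv, s_inv] at h

namespace IsTFam
variable {q : F} {Tw : Perm (Fin n) → H F q n}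

lemma mul_s_of_len (hTw : IsTFam F q Tw) {j : Fin (n - 1)} {w : Perm (Fin n)}
    (h : len (w * s j) = len w + 1) :
    Tw (w * s j) = Tw w * T F q j := by
  induction hm : len w using Nat.strong_induction_on generalizing w with
  | _ m ih =>
    by_cases hw : w = 1
    · rw [hw, one_mul, hTw.1, one_mul, hTw.2.1]
    obtain ⟨i, hi⟩ := exists_left_descent hw
    obtain ⟨v, rfl⟩ : ∃ v, w = s i * v := ⟨s i * w, (s_mul_s_mul i w).symm⟩
    rw [s_mul_s_mul] at hi
    rw [mul_assoc] at h ⊢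
    have h1 := len_s_mul i (v * s j)
    have h2 := len_mul_s j v
    rw [hTw.2.2 i (v * s j) (by omega), ih (len v) (by omega) (by omega) rfl, hTw.2.2 i v hi,
      mul_assoc]

lemma T_mul (hTw : IsTFam F q Tw) (j : Fin (n - 1)) (w : Perm (Fin n)) :
    ∃ r : F, T F q j * Tw w = Tw (s j * w) + r • Tw w := by
  obtain h | h := len_s_mul j w
  · exact ⟨0, by rw [hTw.2.2 j w h, zero_smul, add_zero]⟩
  · have h' := hTw.2.2 j (s j * w) (by rwa [s_mul_s_mul])
    rw [s_mul_s_mul] at h'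
    refine ⟨q - q⁻¹, ?_⟩
    rw [h', ← mul_assoc, T_mul_T, add_mul, one_mul, smul_mul_assoc, add_comm]

lemma mul_T (hTw : IsTFam F q Tw) (j : Fin (n - 1)) (w : Perm (Fin n)) :
    ∃ r : F, Tw w * T F q j = Tw (w * s j) + r • Tw w := by
  have hw : w * s j * s j = w := by rw [mul_assoc, s_mul_s, mul_one]
  obtain h | h := len_mul_s j w
  · exact ⟨0, by rw [hTw.mul_s_of_len h, zero_smul, add_zero]⟩
  · have h' := hTw.mul_s_of_len (j := j) (w := w * s j) (by rwa [hw])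
    rw [hw] at h'
    refine ⟨q - q⁻¹, ?_⟩
    rw [h', mul_assoc, T_mul_T, mul_add, mul_one, mul_smul_comm, add_comm]

end IsTFam

section SpanOver
variable {q : F} {Tw : Perm (Fin n) → H F q n}

/-- The span of all `X^α C^β T_w` with `w ∈ S`. -/
def spanOver (Tw : Perm (Fin n) → H F q n) (S : Set (Perm (Fin n))) : Submodule F (H F q n) :=
  Submodule.span F (fullFam q Tw '' {p | p.2 ∈ S})

lemma XCalg_mul_Tw_mem {S : Set (Perm (Fin n))} {a : H F q n} (ha : a ∈ XCalg F q n)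
    {w : Perm (Fin n)} (hw : w ∈ S) : a * Tw w ∈ spanOver Tw S := by
  have : monSpan F q n ≤ (spanOver Tw S).comap (LinearMap.mulRight F (Tw w)) := by
    refine Submodule.span_le.mpr ?_
    rintro _ ⟨p, rfl⟩
    exact Submodule.subset_span ⟨(p, w), hw, rfl⟩
  exact this (mem_monSpan_of_mem_XCalg q ha)

lemma spanOver_induction {S : Set (Perm (Fin n))} {N : Submodule F (H F q n)}
    {f : H F q n →ₗ[F] H F q n} (h : ∀ a ∈ XCalg F q n, ∀ w ∈ S, f (a * Tw w) ∈ N) {m : H F q n}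
    (hm : m ∈ spanOver Tw S) : f m ∈ N := by
  have : spanOver Tw S ≤ N.comap f := by
    refine Submodule.span_le.mpr ?_
    rintro _ ⟨p, hp, rfl⟩
    exact h _ (mul_mem (Xmon_mem_XCalg q _) (Cmon_mem_XCalg q _)) _ hp
  exact this hm

lemma XCalg_mul_mem_spanOver {S : Set (Perm (Fin n))} {a m : H F q n} (ha : a ∈ XCalg F q n)
    (hm : m ∈ spanOver Tw S) : a * m ∈ spanOver Tw S := by
  refine spanOver_induction (f := LinearMap.mulLeft F a) (fun b hb w hw => ?_) hm
  rw [LinearMap.mulLeft_apply, ← mul_assoc]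
  exact XCalg_mul_Tw_mem (mul_mem ha hb) hw

lemma T_mul_mem_spanOver (hTw : IsTFam F q Tw) {S : Set (Perm (Fin n))} {j : Fin (n - 1)}
    (hS : ∀ w ∈ S, s j * w ∈ S) {m : H F q n} (hm : m ∈ spanOver Tw S) :
    T F q j * m ∈ spanOver Tw S := by
  refine spanOver_induction (f := LinearMap.mulLeft F (T F q j)) (fun a ha w hw => ?_) hm
  obtain ⟨b, hb, d, hd, h⟩ := T_mul_XCalg q j ha
  obtain ⟨r, hr⟩ := hTw.T_mul j w
  rw [LinearMap.mulLeft_apply, ← mul_assoc, h, add_mul, mul_assoc, hr, mul_add, mul_smul_comm]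
  exact add_mem (add_mem (XCalg_mul_Tw_mem hb (hS w hw))
    (Submodule.smul_mem _ r (XCalg_mul_Tw_mem hb hw))) (XCalg_mul_Tw_mem hd hw)

lemma mul_T_mem_spanOver (hTw : IsTFam F q Tw) {S : Set (Perm (Fin n))} {j : Fin (n - 1)}
    (hS : ∀ w ∈ S, w * s j ∈ S) {m : H F q n} (hm : m ∈ spanOver Tw S) :
    m * T F q j ∈ spanOver Tw S := by
  refine spanOver_induction (f := LinearMap.mulRight F (T F q j)) (fun a ha w hw => ?_) hm
  obtain ⟨r, hr⟩ := hTw.mul_T j w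
  rw [LinearMap.mulRight_apply, mul_assoc, hr, mul_add, mul_smul_comm]
  exact add_mem (XCalg_mul_Tw_mem ha (hS w hw)) (Submodule.smul_mem _ r (XCalg_mul_Tw_mem ha hw))

lemma parabolicJ_mul_mem_spanOver (hTw : IsTFam F q Tw) {J : Set (Fin (n - 1))}
    {S : Set (Perm (Fin n))} (hS : ∀ j ∈ J, ∀ w ∈ S, s j * w ∈ S) {a m : H F q n}
    (ha : a ∈ parabolicJ F q J) (hm : m ∈ spanOver Tw S) : a * m ∈ spanOver Tw S := by
  induction ha using Algebra.adjoin_induction generalizing m with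
  | mem a ha =>
    obtain ha | ⟨j, hj, rfl⟩ := ha
    · exact XCalg_mul_mem_spanOver (Algebra.subset_adjoin ha) hm
    · exact T_mul_mem_spanOver hTw (hS j hj) hm
  | algebraMap r => exact XCalg_mul_mem_spanOver (Subalgebra.algebraMap_mem _ r) hm
  | add a b _ _ ha hb =>
    rw [add_mul]
    exact add_mem (ha hm) (hb hm)
  | mul a b _ _ ha hb =>
    rw [mul_assoc]
    exact ha (hb hm)

lemma mul_clparC_mem_spanOver (hTw : IsTFam F q Tw) {ν : List ℕ} {S : Set (Perm (Fin n))}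
    (hS : ∀ j, InYoung ν (s j) → ∀ w ∈ S, w * s j ∈ S) {b m : H F q n}
    (hb : b ∈ clparC F q (n := n) ν) (hm : m ∈ spanOver Tw S) : m * b ∈ spanOver Tw S := by
  induction hb using Algebra.adjoin_induction generalizing m with
  | mem b hb =>
    obtain ⟨j, hj, rfl⟩ := hb
    exact mul_T_mem_spanOver hTw (hS j hj) hm
  | algebraMap r =>
    rw [← Algebra.commutes]
    exact XCalg_mul_mem_spanOver (Subalgebra.algebraMap_mem _ r) hm
  | add a b _ _ ha hb =>
    rw [mul_add]
    exact add_mem (ha hm) (hb hm)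
  | mul a b _ _ ha hb =>
    rw [← mul_assoc]
    exact hb (ha hm)

lemma XCalg_le_parabolicJ (J : Set (Fin (n - 1))) : XCalg F q n ≤ parabolicJ F q J :=
  Algebra.adjoin_mono Set.subset_union_left

lemma parabolicJ_univ : parabolicJ F q (Set.univ : Set (Fin (n - 1))) = ⊤ := by
  refine Algebra.eq_top_iff.mpr fun h => ?_
  obtain ⟨a, rfl⟩ := RingQuot.mkAlgHom_surjective F (Rel F q n) h
  induction a using FreeAlgebra.induction with
  | grade0 r =>
    rw [AlgHom.commutes]
    exact Subalgebra.algebraMap_mem _ r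
  | grade1 g =>
    cases g with
    | X i => exact XCalg_le_parabolicJ _ (X_mem_XCalg q i)
    | Xinv i => exact XCalg_le_parabolicJ _ (Xinv_mem_XCalg q i)
    | C i => exact XCalg_le_parabolicJ _ (C_mem_XCalg q i)
    | T i => exact Algebra.subset_adjoin (Or.inr ⟨i, trivial, rfl⟩)
  | mul a b ha hb =>
    rw [map_mul]
    exact mul_mem ha hb
  | add a b ha hb =>
    rw [map_add]
    exact add_mem ha hb

lemma spanOver_univ (hTw : IsTFam F q Tw) : spanOver Tw Set.univ = ⊤ := by
  refine top_le_iff.mp fun h _ => ?_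
  have h1 : (1 : H F q n) ∈ spanOver Tw Set.univ := by
    rw [← hTw.1, ← one_mul (Tw 1)]
    exact XCalg_mul_Tw_mem (one_mem _) trivial
  rw [← mul_one h]
  exact parabolicJ_mul_mem_spanOver hTw (S := Set.univ) (fun _ _ _ _ => trivial)
    (parabolicJ_univ (F := F) (q := q) ▸ Algebra.mem_top) h1

lemma mul_mem_HTxH_left {μ ν : List ℕ} {x : Perm (Fin n)} {a m : H F q n}
    (ha : a ∈ parabolicC F q (n := n) μ) (hm : m ∈ HTxH F q μ ν Tw x) :
    a * m ∈ HTxH F q μ ν Tw x := by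
  have : HTxH F q μ ν Tw x ≤ (HTxH F q μ ν Tw x).comap (LinearMap.mulLeft F a) := by
    refine Submodule.span_le.mpr ?_
    rintro _ ⟨b, hb, d, hd, rfl⟩
    exact Submodule.subset_span ⟨a * b, mul_mem ha hb, d, hd, by
      simp only [LinearMap.mulLeft_apply, mul_assoc]⟩
  exact this hm

lemma mul_mem_HTxH_right {μ ν : List ℕ} {x : Perm (Fin n)} {b m : H F q n}
    (hb : b ∈ clparC F q (n := n) ν) (hm : m ∈ HTxH F q μ ν Tw x) :
    m * b ∈ HTxH F q μ ν Tw x := by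
  have : HTxH F q μ ν Tw x ≤ (HTxH F q μ ν Tw x).comap (LinearMap.mulRight F b) := by
    refine Submodule.span_le.mpr ?_
    rintro _ ⟨a, ha, d, hd, rfl⟩
    exact Submodule.subset_span ⟨a, ha, d * b, mul_mem hd hb, by
      simp only [LinearMap.mulRight_apply, mul_assoc]⟩
  exact this hm

lemma Tw_mem_HTxH (hTw : IsTFam F q Tw) {μ ν : List ℕ} {x w : Perm (Fin n)}
    (hw : InDC μ ν x w) : Tw w ∈ HTxH F q μ ν Tw x := by
  obtain ⟨u, v, hu, hv, rfl⟩ := hw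
  have hx : Tw x ∈ HTxH F q μ ν Tw x :=
    Submodule.subset_span ⟨1, one_mem _, 1, one_mem _, by rw [one_mul, mul_one]⟩
  have hux : ∀ y, Tw y ∈ HTxH F q μ ν Tw x → Tw (u * y) ∈ HTxH F q μ ν Tw x := by
    refine InYoung.induction (P := fun u => ∀ y, Tw y ∈ HTxH F q μ ν Tw x →
      Tw (u * y) ∈ HTxH F q μ ν Tw x) (fun y hy => by rwa [one_mul]) (fun u j _ hj ih y hy => ?_) hu
    rw [mul_assoc]
    refine ih _ ?_
    obtain ⟨r, hr⟩ := hTw.T_mul j y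
    have hT : T F q j ∈ parabolicC F q (n := n) μ :=
      Algebra.subset_adjoin (Or.inr ⟨j, hj, rfl⟩)
    refine (Submodule.add_mem_iff_left _ (Submodule.smul_mem _ r hy)).mp ?_
    rw [← hr]
    exact mul_mem_HTxH_left hT hy
  refine InYoung.induction (P := fun v => Tw (u * x * v) ∈ HTxH F q μ ν Tw x)
    (by rw [mul_one]; exact hux x hx) (fun v j _ hj ih => ?_) hv
  rw [← mul_assoc]
  obtain ⟨r, hr⟩ := hTw.mul_T j (u * x * v)
  have hT : T F q j ∈ clparC F q (n := n) ν := Algebra.subset_adjoin ⟨j, hj, rfl⟩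
  refine (Submodule.add_mem_iff_left _ (Submodule.smul_mem _ r ih)).mp ?_
  rw [← hr]
  exact mul_mem_HTxH_right hT ih

lemma fullFam_mem_HTxH (hTw : IsTFam F q Tw) {μ ν : List ℕ} {x : Perm (Fin n)}
    {p : LC.Idx n × Perm (Fin n)} (hp : InDC μ ν x p.2) : fullFam q Tw p ∈ HTxH F q μ ν Tw x := by
  have h : Xmon F q p.1.1 * Cmon F q p.1.2 ∈ parabolicC F q (n := n) μ :=
    XCalg_le_parabolicJ _ (mul_mem (Xmon_mem_XCalg q p.1.1) (Cmon_mem_XCalg q p.1.2))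
  exact mul_mem_HTxH_left h (Tw_mem_HTxH hTw hp)

theorem HTxH_eq_spanOver (hTw : IsTFam F q Tw) (μ ν : List ℕ) (x : Perm (Fin n)) :
    HTxH F q μ ν Tw x = spanOver Tw {w | InDC μ ν x w} := by
  refine le_antisymm (Submodule.span_le.mpr ?_) (Submodule.span_le.mpr ?_)
  · rintro _ ⟨a, ha, b, hb, rfl⟩
    refine mul_clparC_mem_spanOver hTw (fun j hj w hw => ?_) hb
      (parabolicJ_mul_mem_spanOver hTw (fun j hj w hw => ?_) ha ?_)
    · exact hw.trans ⟨1, s j, InYoung.one _, hj, by rw [one_mul]⟩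
    · exact hw.trans ⟨s j, 1, hj, InYoung.one _, by rw [mul_one]⟩
    · rw [← one_mul (Tw x)]
      exact XCalg_mul_Tw_mem (one_mem _) (InDC.refl x)
  · rintro _ ⟨p, hp, rfl⟩
    exact fullFam_mem_HTxH hTw hp

end SpanOver

theorem dcFam_linearIndependent {q : F} {Tw : Perm (Fin n) → H F q n} (hTw : IsTFam F q Tw)
    (μ ν : List ℕ) (x : Perm (Fin n)) : LinearIndependent F (dcFam F q μ ν Tw x) := by
  let f : (Fin n → ℤ) × (Fin n → Bool) × {w // InDC μ ν x w} → LC.Idx n × Perm (Fin n) :=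
    fun p => ((p.1, p.2.1), p.2.2.1)
  have hf : dcFam F q μ ν Tw x = fullFam q Tw ∘ f := rfl
  rw [hf]
  refine (linearIndependent_fullFam q hTw).comp f ?_
  rintro ⟨α, β, w, hw⟩ ⟨α', β', w', hw'⟩ h
  simp only [f, Prod.mk.injEq] at h
  obtain ⟨⟨rfl, rfl⟩, rfl⟩ := h
  rfl

theorem span_range_dcFam {q : F} {Tw : Perm (Fin n) → H F q n} (μ ν : List ℕ)
    (x : Perm (Fin n)) :
    Submodule.span F (Set.range (dcFam F q μ ν Tw x)) = spanOver Tw {w | InDC μ ν x w} := by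
  refine congrArg _ (Set.Subset.antisymm ?_ ?_)
  · rintro _ ⟨p, rfl⟩
    exact ⟨((p.1, p.2.1), p.2.2.1), p.2.2.2, rfl⟩
  · rintro _ ⟨p, hp, rfl⟩
    exact ⟨(p.1.1, p.1.2, ⟨p.2, hp⟩), rfl⟩

lemma spanOver_mono {q : F} (Tw : Perm (Fin n) → H F q n) {S S' : Set (Perm (Fin n))}
    (h : S ⊆ S') : spanOver Tw S ≤ spanOver Tw S' :=
  Submodule.span_mono (Set.image_mono fun _ hp => h hp)

end DoubleCosets

/-- **Double coset decomposition** (Lemma `soup` of Brundan–Kleshchev): for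
compositions `μ, ν` of `n` and every minimal length double coset representative
`x ∈ D_{μ,ν}`, the subspace `H_μ T_x H^cl_ν` has basis
`{X^α C^β T_w : w ∈ S_μ x S_ν}`, and `H_n = ⊕_{x ∈ D_{μ,ν}} H_μ T_x H^cl_ν`. -/
theorem double_coset_decomposition
    (F : Type) [Field F] [IsAlgClosed F] (h2 : (2 : F) ≠ 0)
    (q : F) (hq : GoodParam F q) (n : ℕ)
    (μ ν : List ℕ) (hμ : IsComposition μ n) (hν : IsComposition ν n)
    (Tw : Equiv.Perm (Fin n) → H F q n) (hTw : IsTFam F q Tw) :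
    (∀ x : Equiv.Perm (Fin n), IsMinDC μ ν x →
      LinearIndependent F (dcFam F q μ ν Tw x) ∧
        Submodule.span F (Set.range (dcFam F q μ ν Tw x)) = HTxH F q μ ν Tw x) ∧
    (⨆ x ∈ {x : Equiv.Perm (Fin n) | IsMinDC μ ν x}, HTxH F q μ ν Tw x) = ⊤ ∧
    ∀ x : Equiv.Perm (Fin n), IsMinDC μ ν x →
      Disjoint (HTxH F q μ ν Tw x)
        (⨆ y ∈ {y : Equiv.Perm (Fin n) | IsMinDC μ ν y ∧ y ≠ x},
          HTxH F q μ ν Tw y) := by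
  simp only [HTxH_eq_spanOver hTw]
  refine ⟨fun x _ => ⟨dcFam_linearIndependent hTw μ ν x, span_range_dcFam μ ν x⟩, ?_, ?_⟩
  · rw [← top_le_iff, ← spanOver_univ hTw]
    refine Submodule.span_le.mpr ?_
    rintro _ ⟨p, -, rfl⟩
    obtain ⟨x, hx, hp⟩ := exists_isMinDC μ ν p.2
    exact Submodule.mem_iSup_of_mem x
      (Submodule.mem_iSup_of_mem hx (Submodule.subset_span ⟨p, hp, rfl⟩))
  · intro x hx
    have hdisj : Disjoint (spanOver Tw {w | InDC μ ν x w}) (spanOver Tw {w | ¬InDC μ ν x w}) :=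
      (linearIndependent_fullFam q hTw).disjoint_span_image
        (Set.disjoint_left.mpr fun _ hp hp' => hp' hp)
    refine hdisj.mono_right (iSup₂_le fun y hy => spanOver_mono Tw ?_)
    intro w (hw : InDC μ ν y w) (hxw : InDC μ ν x w)
    exact hy.2 (hx.eq_of_inDC hy.1 (hxw.trans hw.symm)).symm

end HC
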